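/- arXiv:1407.5041 — 2 statements merged into one kernel-verified Lean document; each statement's English description precedes it below -/
import Mathlib

section
/- Let K be a field and K(x) a purely transcendental extension of transcendence degree 1. Then the restriction map res_{K(x)/K} : Br(K) → Br(K(x)) is injective. -/
open scoped TensorProduct
universe u

/-- A finite-dimensional `F`-algebra is *split* if it is a matrix algebra over `F`. -/
def IsSplit (F : Type u) [Field F] (A : Type u) [Ring A] [Algebra F A] : Prop :=
  ∃ n : ℕ, 0 < n ∧ Nonempty (A ≃ₐ[F] Matrix (Fin n) (Fin n) F)

/-- Brauer equivalence of two `F`-algebras. -/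
def BrauerEquiv (F : Type u) [Field F] (A B : Type u) [Ring A] [Algebra F A]
    [Ring B] [Algebra F B] : Prop :=
  ∃ n m : ℕ, 0 < n ∧ 0 < m ∧ Nonempty (Matrix (Fin n) (Fin n) A ≃ₐ[F] Matrix (Fin m) (Fin m) B)

/-- `A` is a finite-dimensional central simple `F`-algebra. -/
def IsCSA (F A : Type u) [Field F] [Ring A] [Algebra F A] : Prop :=
  Algebra.IsCentral F A ∧ IsSimpleRing A ∧ FiniteDimensional F A

/-- The `n`-fold tensor power of an `F`-algebra. -/
abbrev tpow (F : Type u) [Field F] (A : Type u) [Ring A] [Algebra F A] (n : ℕ) : Type u :=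
  ⨂[F] _ : Fin n, A

/-- The Brauer class of `A` is killed by `p`: its `p`-th tensor power is split. -/
def IsPTorsion (F : Type u) [Field F] (A : Type u) [Ring A] [Algebra F A] (p : ℕ) : Prop :=
  IsSplit F (tpow F A p)

/-- The restriction map `Br(F)[p] → Br(E)[p]` along `f : F →+* E` is injective:
two `p`-torsion Brauer classes that agree after scalar extension agree already over `F`. -/
def ResInjP (p : ℕ) (F E : Type u) [Field F] [Field E] (f : F →+* E) : Prop :=
  letI : Algebra F E := f.toAlgebra
  ∀ (A B : Type u) [Ring A] [Algebra F A] [Ring B] [Algebra F B],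
    IsCSA F A → IsCSA F B → IsPTorsion F A p → IsPTorsion F B p →
    BrauerEquiv E (E ⊗[F] A) (E ⊗[F] B) → BrauerEquiv F A B

/-- The restriction map `Br(F) → Br(E)` along `f : F →+* E` is injective. -/
def ResInj (F E : Type u) [Field F] [Field E] (f : F →+* E) : Prop :=
  letI : Algebra F E := f.toAlgebra
  ∀ (A B : Type u) [Ring A] [Algebra F A] [Ring B] [Algebra F B],
    IsCSA F A → IsCSA F B →
    BrauerEquiv E (E ⊗[F] A) (E ⊗[F] B) → BrauerEquiv F A B

/-- `D` is a central division algebra of degree `p` over `K`. -/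
def IsCentralDivisionOfDeg (K D : Type u) [Field K] [DivisionRing D] [Algebra K D]
    (p : ℕ) : Prop :=
  Algebra.IsCentral K D ∧ FiniteDimensional K D ∧ Module.finrank K D = p ^ 2

/-!
A field `K` is existentially closed in `E` if every finitely generated `K`-subalgebra of `E` has a
`K`-point. In that case an isomorphism of finite-dimensional algebras over `E` is already defined,
together with its inverse, over a finitely generated subalgebra `S` of `E`, and specializing it at a
`K`-point of `S` gives an isomorphism over `K`. An infinite field `K` is existentially closed in
`K(x)`, because finitely many rational functions are regular at a common point of `K`. Over a finite
field the Brauer group is trivial, by Wedderburn's little theorem.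
-/

theorem exists_fg_range_le_range_rTensor_subtype {R M N P : Type*} [CommRing R] [AddCommGroup M]
    [Module R M] [AddCommGroup N] [Module R N] [AddCommGroup P] [Module R P] [Module.Finite R M]
    (f : M →ₗ[R] N ⊗[R] P) :
    ∃ N' : Submodule R N, N'.FG ∧ LinearMap.range f ≤ LinearMap.range (N'.subtype.rTensor P) := by
  obtain ⟨t, ht⟩ := (Module.Finite.fg_top (R := R) (M := M)).map f
  obtain ⟨N', hN', htN'⟩ :=
    Submodule.exists_fg_le_subset_range_rTensor_subtype (t : Set (N ⊗[R] P)) t.finite_toSet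
  refine ⟨N', hN', ?_⟩
  rw [LinearMap.range_eq_map, ← ht]
  exact Submodule.span_le.2 htN'

section Descent

variable {R E : Type*} [CommRing R] [CommRing E] [Algebra R E]
variable {C D : Type*} [Ring C] [Algebra R C] [Ring D] [Algebra R D]

theorem map_tmul_eq_smul_map_one_tmul {B : Type*} [Ring B] [Algebra E B] (φ : E ⊗[R] C →ₐ[E] B)
    (a : E) (c : C) : φ (a ⊗ₜ c) = a • φ (1 ⊗ₜ c) := by
  rw [← map_smul, TensorProduct.smul_tmul', smul_eq_mul, mul_one]

/-- The map `S ⊗ D → E ⊗ D` induced by the inclusion of a subalgebra `S ⊆ E`, as a homomorphism of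
`S`-algebras; algebras and maps over `E` are descended along it. -/
noncomputable def inclusionTensor (S : Subalgebra R E) (D : Type*) [Ring D] [Algebra R D] :
    S ⊗[R] D →ₐ[S] E ⊗[R] D :=
  Algebra.TensorProduct.map (Algebra.ofId S E) (AlgHom.id R D)

theorem inclusionTensor_injective [Module.Flat R D] (S : Subalgebra R E) :
    Function.Injective (inclusionTensor S D) :=
  Module.Flat.rTensor_preserves_injective_linearMap S.val.toLinearMap Subtype.val_injective

theorem range_rTensor_subtype_le_range_inclusionTensor {N : Submodule R E} {S : Subalgebra R E}
    (h : N ≤ S.toSubmodule) :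
    (LinearMap.range (N.subtype.rTensor D) : Set (E ⊗[R] D)) ⊆ (inclusionTensor S D).range := by
  rintro _ ⟨y, rfl⟩
  refine ⟨(Submodule.inclusion h).rTensor D y, ?_⟩
  exact (LinearMap.rTensor_comp_apply D S.toSubmodule.subtype (Submodule.inclusion h) y).symm

theorem exists_fg_forall_mem_range_inclusionTensor [Module.Finite R C] [Module.Finite R D]
    (f : C →ₗ[R] E ⊗[R] D) (g : D →ₗ[R] E ⊗[R] C) :
    ∃ S : Subalgebra R E, S.FG ∧
      (∀ c, f c ∈ (inclusionTensor S D).range) ∧ ∀ d, g d ∈ (inclusionTensor S C).range := by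
  obtain ⟨M, ⟨s, rfl⟩, hf⟩ := exists_fg_range_le_range_rTensor_subtype f
  obtain ⟨N, ⟨t, rfl⟩, hg⟩ := exists_fg_range_le_range_rTensor_subtype g
  refine ⟨Algebra.adjoin R s ⊔ Algebra.adjoin R t,
    (Subalgebra.fg_adjoin_finset s).sup (Subalgebra.fg_adjoin_finset t),
    fun c => range_rTensor_subtype_le_range_inclusionTensor ?_ (hf ⟨c, rfl⟩),
    fun d => range_rTensor_subtype_le_range_inclusionTensor ?_ (hg ⟨d, rfl⟩)⟩
  · exact (Algebra.span_le_adjoin R _).trans (le_sup_left (α := Subalgebra R E))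
  · exact (Algebra.span_le_adjoin R _).trans (le_sup_right (α := Subalgebra R E))

theorem exists_algHom_inclusionTensor_apply_eq [Module.Flat R D] {S : Subalgebra R E}
    (φ : E ⊗[R] C →ₐ[E] E ⊗[R] D) (hφ : ∀ c, φ (1 ⊗ₜ c) ∈ (inclusionTensor S D).range) :
    ∃ ψ : S ⊗[R] C →ₐ[S] S ⊗[R] D,
      ∀ x, inclusionTensor S D (ψ x) = φ (inclusionTensor S C x) := by
  let φS : S ⊗[R] C →ₐ[S] E ⊗[R] D := (φ.restrictScalars S).comp (inclusionTensor S C)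
  have hφS (x : S ⊗[R] C) : φS x ∈ (inclusionTensor S D).range := by
    induction x with
    | zero => simp
    | tmul s c =>
      have : φS (s ⊗ₜ c) = s • φ (1 ⊗ₜ c) := map_tmul_eq_smul_map_one_tmul φ (s : E) c
      exact this ▸ Subalgebra.smul_mem _ (hφ c) s
    | add x y hx hy => simpa using add_mem hx hy
  let i := AlgEquiv.ofInjective (inclusionTensor S D) (inclusionTensor_injective S)
  refine ⟨i.symm.toAlgHom.comp (φS.codRestrict _ hφS), fun x => ?_⟩
  exact congrArg Subtype.val (i.apply_symm_apply ⟨φS x, hφS x⟩)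

theorem exists_fg_nonempty_algEquiv_of_tensorProduct [Module.Finite R C] [Module.Flat R C]
    [Module.Finite R D] [Module.Flat R D] (e : E ⊗[R] C ≃ₐ[E] E ⊗[R] D) :
    ∃ S : Subalgebra R E, S.FG ∧ Nonempty (S ⊗[R] C ≃ₐ[S] S ⊗[R] D) := by
  obtain ⟨S, hS, he, he'⟩ := exists_fg_forall_mem_range_inclusionTensor
    (e.toLinearMap.restrictScalars R ∘ₗ TensorProduct.mk R E C 1)
    (e.symm.toLinearMap.restrictScalars R ∘ₗ TensorProduct.mk R E D 1)
  obtain ⟨f, hf⟩ := exists_algHom_inclusionTensor_apply_eq e.toAlgHom he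
  obtain ⟨g, hg⟩ := exists_algHom_inclusionTensor_apply_eq e.symm.toAlgHom he'
  refine ⟨S, hS, ⟨AlgEquiv.ofAlgHom f g (AlgHom.ext fun x => ?_) (AlgHom.ext fun x => ?_)⟩⟩
  · exact inclusionTensor_injective S <| (hf _).trans <| by simp [hg]
  · exact inclusionTensor_injective S <| (hg _).trans <| by simp [hf]

end Descent

section Specialization

variable {R S : Type*} [CommRing R] [CommRing S] [Algebra R S]
variable {C D : Type*} [Ring C] [Algebra R C] [Ring D] [Algebra R D]

/-- The fibre map `S ⊗ D → D` at an `R`-point `p` of `S`. -/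
noncomputable def specialize (p : S →ₐ[R] R) (D : Type*) [Ring D] [Algebra R D] :
    S ⊗[R] D →ₐ[R] D :=
  (Algebra.TensorProduct.lid R D).toAlgHom.comp (Algebra.TensorProduct.map p (AlgHom.id R D))

theorem specialize_tmul (p : S →ₐ[R] R) (s : S) (d : D) :
    specialize p D (s ⊗ₜ d) = p s • d :=
  rfl

theorem specialize_smul (p : S →ₐ[R] R) (s : S) (x : S ⊗[R] D) :
    specialize p D (s • x) = p s • specialize p D x := by
  induction x with
  | zero => simp
  | tmul t d => simp [TensorProduct.smul_tmul', specialize_tmul, mul_smul]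
  | add x y hx hy => simp [hx, hy]

/-- The homomorphism `C → D` induced on fibres at an `R`-point `p` of `S` by a homomorphism
`S ⊗ C → S ⊗ D`. -/
noncomputable def specializeHom (p : S →ₐ[R] R) (f : S ⊗[R] C →ₐ[S] S ⊗[R] D) : C →ₐ[R] D :=
  ((specialize p D).comp (f.restrictScalars R)).comp Algebra.TensorProduct.includeRight

theorem specializeHom_specialize (p : S →ₐ[R] R) (f : S ⊗[R] C →ₐ[S] S ⊗[R] D) (x : S ⊗[R] C) :
    specializeHom p f (specialize p C x) = specialize p D (f x) := by
  induction x with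
  | zero => simp
  | tmul s c =>
    rw [map_tmul_eq_smul_map_one_tmul f, specialize_smul, specialize_tmul, map_smul]
    rfl
  | add x y hx hy => simp [hx, hy]

theorem specializeHom_apply_specializeHom {f : S ⊗[R] C →ₐ[S] S ⊗[R] D}
    {g : S ⊗[R] D →ₐ[S] S ⊗[R] C} (p : S →ₐ[R] R) (hgf : ∀ x, g (f x) = x) (c : C) :
    specializeHom p g (specializeHom p f c) = c :=
  calc specializeHom p g (specializeHom p f c)
      = specialize p C (g (f (1 ⊗ₜ c))) := specializeHom_specialize p g (f (1 ⊗ₜ c))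
    _ = c := by simp [hgf, specialize_tmul]

/-- The isomorphism induced on fibres at an `R`-point `p` of `S` by an isomorphism of constant
`S`-algebras. -/
noncomputable def specializeEquiv (p : S →ₐ[R] R) (e : S ⊗[R] C ≃ₐ[S] S ⊗[R] D) : C ≃ₐ[R] D :=
  AlgEquiv.ofAlgHom (specializeHom p e.toAlgHom) (specializeHom p e.symm.toAlgHom)
    (AlgHom.ext <| specializeHom_apply_specializeHom (f := e.symm.toAlgHom) (g := e.toAlgHom) p
      e.apply_symm_apply)
    (AlgHom.ext <| specializeHom_apply_specializeHom (f := e.toAlgHom) (g := e.symm.toAlgHom) p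
      e.symm_apply_apply)

end Specialization

/-- `K` is existentially closed in the extension field `E`: every system of polynomial equations
over `K` that is solvable in `E` is solvable in `K`. This is expressed through points of finitely
generated subalgebras of `E`, which are the algebras generated by a solution. -/
def IsExistentiallyClosed (K E : Type*) [Field K] [Field E] [Algebra K E] : Prop :=
  ∀ S : Subalgebra K E, S.FG → Nonempty (S →ₐ[K] K)

theorem IsExistentiallyClosed.nonempty_algEquiv {K E C D : Type*} [Field K] [Field E] [Algebra K E]
    [Ring C] [Algebra K C] [FiniteDimensional K C] [Ring D] [Algebra K D] [FiniteDimensional K D]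
    (hE : IsExistentiallyClosed K E) (e : E ⊗[K] C ≃ₐ[E] E ⊗[K] D) : Nonempty (C ≃ₐ[K] D) := by
  obtain ⟨S, hS, ⟨eS⟩⟩ := exists_fg_nonempty_algEquiv_of_tensorProduct e
  obtain ⟨p⟩ := hE S hS
  exact ⟨specializeEquiv p eS⟩

/-- Matrix algebras commute with scalar extension. -/
noncomputable def tensorMatrixEquiv (R E A n : Type*) [CommSemiring R] [CommSemiring E]
    [Algebra R E] [Semiring A] [Algebra R A] [Fintype n] [DecidableEq n] :
    E ⊗[R] Matrix n n A ≃ₐ[E] Matrix n n (E ⊗[R] A) :=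
  (Algebra.TensorProduct.congr (Matrix.uniqueAlgEquiv (m := Unit)).symm AlgEquiv.refl).trans <|
    (Matrix.kroneckerTMulAlgEquiv Unit n R E E A).trans <|
      Matrix.reindexAlgEquiv E (E ⊗[R] A) (Equiv.uniqueProd n Unit)

theorem IsExistentiallyClosed.brauerEquiv {K E A B : Type u} [Field K] [Field E] [Algebra K E]
    [Ring A] [Algebra K A] [FiniteDimensional K A] [Ring B] [Algebra K B] [FiniteDimensional K B]
    (hE : IsExistentiallyClosed K E) (h : BrauerEquiv E (E ⊗[K] A) (E ⊗[K] B)) :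
    BrauerEquiv K A B := by
  obtain ⟨n, m, hn, hm, ⟨e⟩⟩ := h
  exact ⟨n, m, hn, hm, hE.nonempty_algEquiv <|
    (tensorMatrixEquiv K E A (Fin n)).trans <| e.trans (tensorMatrixEquiv K E B (Fin m)).symm⟩

theorem IsExistentiallyClosed.resInj {K E : Type u} [Field K] [Field E] [Algebra K E]
    (hE : IsExistentiallyClosed K E) : ResInj K E (algebraMap K E) := by
  rw [← toAlgebra_algebraMap (R := K) (S := E)] at hE
  rintro A B _ _ _ _ ⟨_, _, _⟩ ⟨_, _, _⟩ h
  let := (algebraMap K E).toAlgebra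
  exact hE.brauerEquiv h

section RationalFunctions

variable {K : Type*} [Field K]

/-- The local ring of rational functions that are regular at `a`. -/
def regularAt (a : K) : Subalgebra K (RatFunc K) where
  carrier := {f | f.denom.eval a ≠ 0}
  mul_mem' {f g} hf hg := ne_zero_of_dvd_ne_zero
    (by simpa using And.intro hf hg) (Polynomial.eval_dvd (RatFunc.denom_mul_dvd f g))
  add_mem' {f g} hf hg := ne_zero_of_dvd_ne_zero
    (by simpa using And.intro hf hg) (Polynomial.eval_dvd (RatFunc.denom_add_dvd f g))
  algebraMap_mem' r := by simp [RatFunc.algebraMap_eq_C, RatFunc.denom_C]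

/-- The value at `a` of a rational function that is regular at `a`. -/
noncomputable def evalRegularAt (a : K) : regularAt a →ₐ[K] K where
  toFun f := RatFunc.eval (RingHom.id K) a f
  map_one' := by simp
  map_zero' := by simp
  map_mul' f g := RatFunc.eval_mul (f := RingHom.id K) (a := a) f.2 g.2
  map_add' f g := RatFunc.eval_add (f := RingHom.id K) (a := a) f.2 g.2
  commutes' r := by
    change RatFunc.eval (RingHom.id K) a (algebraMap K (RatFunc K) r) = r
    simp [RatFunc.algebraMap_eq_C]

theorem exists_subset_regularAt [Infinite K] (s : Finset (RatFunc K)) :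
    ∃ a : K, (s : Set (RatFunc K)) ⊆ regularAt a := by
  have hs : ∏ f ∈ s, f.denom ≠ 0 := Finset.prod_ne_zero_iff.2 fun f _ => f.denom_ne_zero
  obtain ⟨a, ha⟩ := Polynomial.exists_eval_ne_zero_of_natDegree_lt_card _ hs
    (Cardinal.natCast_lt_aleph0.trans_le (Cardinal.aleph0_le_mk K))
  rw [Polynomial.eval_prod, Finset.prod_ne_zero_iff] at ha
  exact ⟨a, ha⟩

theorem isExistentiallyClosed_ratFunc [Infinite K] : IsExistentiallyClosed K (RatFunc K) := by
  rintro _ ⟨s, rfl⟩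
  obtain ⟨a, ha⟩ := exists_subset_regularAt s
  exact ⟨(evalRegularAt a).comp (Subalgebra.inclusion (Algebra.adjoin_le ha))⟩

end RationalFunctions

theorem isCentral_of_isCentral_matrix {K D n : Type*} [CommSemiring K] [Semiring D] [Algebra K D]
    [Fintype n] [DecidableEq n] [Nonempty n] [Algebra.IsCentral K (Matrix n n D)] :
    Algebra.IsCentral K D where
  out d hd := by
    have hscalar : Matrix.scalarAlgHom n K d ∈ Subalgebra.center K (Matrix n n D) := by
      rw [Matrix.subalgebraCenter_eq_scalarAlgHom_map]
      exact ⟨d, hd, rfl⟩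
    obtain ⟨k, hk⟩ := Algebra.mem_bot.1 (Algebra.IsCentral.out hscalar)
    let i : n := Classical.arbitrary n
    have hentry := congrFun (congrFun hk i) i
    exact Algebra.mem_bot.2 ⟨k, by simpa [Matrix.algebraMap_matrix_apply] using hentry⟩

theorem algebraMap_bijective_of_isCentral_of_finite (K D : Type*) [Field K] [DivisionRing D]
    [Algebra K D] [Finite D] [Algebra.IsCentral K D] : Function.Bijective (algebraMap K D) := by
  refine ⟨(algebraMap K D).injective, fun d => ?_⟩
  have hd : d ∈ Subalgebra.center K D :=
    Subalgebra.mem_center_iff.2 fun x => (littleWedderburn D).mul_comm x d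
  exact Algebra.mem_bot.1 (Algebra.IsCentral.out hd)

theorem IsCSA.isSplit_of_finite {K A : Type u} [Field K] [Finite K] [Ring A] [Algebra K A]
    (hA : IsCSA K A) : IsSplit K A := by
  obtain ⟨_, _, _⟩ := hA
  have : IsArtinianRing A := .of_finite K A
  obtain ⟨n, _, D, _, _, _, ⟨e⟩⟩ :=
    IsSimpleRing.exists_algEquiv_matrix_divisionRing_finite K A
  have : Algebra.IsCentral K (Matrix (Fin n) (Fin n) D) := .of_algEquiv K A _ e
  have : Algebra.IsCentral K D := isCentral_of_isCentral_matrix (n := Fin n)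
  have : Finite D := Module.finite_of_finite K
  let eD : K ≃ₐ[K] D :=
    .ofBijective (Algebra.ofId K D) (algebraMap_bijective_of_isCentral_of_finite K D)
  exact ⟨n, NeZero.pos n, ⟨e.trans eD.symm.mapMatrix⟩⟩

open Matrix in
theorem IsSplit.brauerEquiv {K A B : Type u} [Field K] [Ring A] [Algebra K A] [Ring B] [Algebra K B]
    (hA : IsSplit K A) (hB : IsSplit K B) : BrauerEquiv K A B := by
  obtain ⟨r, hr, ⟨e⟩⟩ := hA
  obtain ⟨s, hs, ⟨f⟩⟩ := hB
  -- `Mₛ(A) ≅ Mₛ(Mᵣ(K)) ≅ Mᵣ(Mₛ(K)) ≅ Mᵣ(B)`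
  exact ⟨s, r, hs, hr, ⟨e.mapMatrix.trans <| (compAlgEquiv _ _ _ _).trans <|
    (reindexAlgEquiv K K (.prodComm (Fin s) (Fin r))).trans <|
    (compAlgEquiv _ _ _ _).symm.trans f.symm.mapMatrix⟩⟩

theorem resInj_of_finite {K E : Type u} [Field K] [Finite K] [Field E] (f : K →+* E) :
    ResInj K E f :=
  fun _ _ _ _ _ _ hA hB _ => hA.isSplit_of_finite.brauerEquiv hB.isSplit_of_finite

/-- The restriction map `Br(K) → Br(K(x))` to the rational function field
is injective. -/
theorem resInj_ratFunc (K : Type u) [Field K] :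
    ResInj K (RatFunc K) (algebraMap K (RatFunc K)) := by
  cases finite_or_infinite K
  · exact resInj_of_finite _
  · exact isExistentiallyClosed_ratFunc.resInj
end

section
/- Let F be a field and C a central simple F-algebra. The kernel of the restriction map Br(F) → Br(F(SB(C))), where F(SB(C)) is the function field of the Severi–Brauer variety of C, is the cyclic subgroup of Br(F) generated by the class [C]. -/
open scoped TensorProduct
universe u

/-- An `F`-place from `E` to `N`: a valuation subring of `E` containing (the image of) `F`
together with an `F`-compatible ring homomorphism to `N`. -/
structure FPlace (F E N : Type u) [Field F] [Field E] [Field N]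
    [Algebra F E] [Algebra F N] : Type u where
  V : ValuationSubring E
  f : V →+* N
  compat : ∀ a : F, ∃ h : algebraMap F E a ∈ V, f ⟨algebraMap F E a, h⟩ = algebraMap F N a

/-- `E` is a generic splitting field of the central simple `F`-algebra `C`: it splits `C`,
and it admits an `F`-place into every field extension of `F` splitting `C`.  The function
field `F(SB(C))` of the Severi–Brauer variety of `C` is such a field (Amitsur). -/
def IsGenericSplittingField (F C E : Type u) [Field F] [Ring C] [Algebra F C]
    [Field E] [Algebra F E] : Prop :=
  IsSplit E (E ⊗[F] C) ∧
    ∀ (N : Type u) [Field N] [Algebra F N], IsSplit N (N ⊗[F] C) → Nonempty (FPlace F E N)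

/-!
The idea is Amitsur's. Over a finite Galois splitting field `L` of `B` and `C`, with group `G`, both
classes are given by factor sets `b` and `a`, compared up to coboundaries. The twisting matrices of
`C` let `G` act semilinearly on the degree-zero homogeneous rational functions over `L`, and the
field of invariants, the function field of the Severi–Brauer variety, splits `C`. If it also splits
`B`, then `b` is the coboundary of a family `f` of degree-zero rational functions. Clearing
denominators and comparing prime factorizations, one finds a polynomial `q` such that `f σ` is a
constant times the quotient of the transform of `q` under `σ` by `q`. Since the twisting matrices
compose only up to `a`, a homogeneous `q` of degree `k` shows that `b` and `a ^ k` differ by a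
coboundary, so that `B` is Brauer equivalent to the `k`-th tensor power of `C`.

A generic splitting field `E` has a place into this field of invariants. Representations of an
algebra by matrices over `E` can be carried along a place: the finitely generated module spanned by
the translates of the standard basis is a lattice over the valuation ring, hence free, and on it the
representation reduces modulo the maximal ideal.
-/

/-! ### Central simple algebras -/

namespace Amitsur

section CentralSimple

variable {F A : Type*} [Field F] [Ring A] [Algebra F A]

theorem isSimpleModule_mulLeftRight_range [IsSimpleRing A] :
    IsSimpleModule (AlgHom.mulLeftRight F A).range A := by
  have mul_mem (N : Submodule (AlgHom.mulLeftRight F A).range A) (p q : A) {x : A} (hx : x ∈ N) :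
      p * x * q ∈ N := by
    simpa [Subalgebra.smul_def] using
      N.smul_mem (⟨_, p ⊗ₜ MulOpposite.op q, rfl⟩ : (AlgHom.mulLeftRight F A).range) hx
  rw [isSimpleModule_iff]
  refine { eq_bot_or_eq_top := fun N ↦ ?_ }
  let I : TwoSidedIdeal A := .mk' N N.zero_mem N.add_mem
    (fun {x} hx ↦ by simpa using mul_mem N (-1) 1 hx)
    (fun {x _} hy ↦ by simpa using mul_mem N x 1 hy)
    (fun {_ y} hx ↦ by simpa using mul_mem N 1 y hx)
  have mem_I (x : A) : x ∈ I ↔ x ∈ N := by simp [I, TwoSidedIdeal.mem_mk']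
  refine (eq_bot_or_eq_top I).imp (fun h ↦ ?_) (fun h ↦ ?_) <;> ext x
  · simp [← mem_I, h, TwoSidedIdeal.mem_bot]
  · simp [← mem_I, h]

theorem exists_eq_smul_of_mulLeftRight_range [Algebra.IsCentral F A]
    (f : Module.End (AlgHom.mulLeftRight F A).range A) : ∃ c : F, ∀ x, f x = c • x := by
  have map_mul_mul (p q x : A) : f (p * x * q) = p * f x * q := by
    simpa [Subalgebra.smul_def] using
      f.map_smul (⟨_, p ⊗ₜ MulOpposite.op q, rfl⟩ : (AlgHom.mulLeftRight F A).range) x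
  have map_left (x : A) : f x = x * f 1 := by simpa using map_mul_mul x 1 1
  have map_right (x : A) : f x = f 1 * x := by simpa using map_mul_mul 1 x 1
  obtain ⟨c, hc⟩ := (Algebra.IsCentral.mem_center_iff F).1 <|
    Subalgebra.mem_center_iff.2 fun b ↦ (map_left b).symm.trans (map_right b)
  exact ⟨c, fun x ↦ by rw [map_right, hc, Algebra.smul_def]⟩

variable [Algebra.IsCentral F A] [IsSimpleRing A] [FiniteDimensional F A]

theorem mulLeftRight_surjective : Function.Surjective (AlgHom.mulLeftRight F A) := by
  classical
  intro φ
  have := isSimpleModule_mulLeftRight_range (F := F) (A := A)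
  let φ' : Module.End (Module.End (AlgHom.mulLeftRight F A).range A) A :=
    { φ with
      map_smul' := fun f x ↦ by
        obtain ⟨c, hc⟩ := exists_eq_smul_of_mulLeftRight_range f
        simp [hc] }
  let b := Module.finBasis F A
  obtain ⟨⟨_, t, rfl⟩, ht⟩ :=
    jacobson_density (R := (AlgHom.mulLeftRight F A).range) φ' (Finset.univ.image b)
  exact ⟨t, b.ext fun i ↦ (ht (b i) (by simp)).symm⟩

instance isAzumaya : IsAzumaya F A where
  bij := by
    have hs := mulLeftRight_surjective (F := F) (A := A)
    refine ⟨?_, hs⟩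
    refine (LinearMap.injective_iff_surjective_of_finrank_eq_finrank
      (f := (AlgHom.mulLeftRight F A).toLinearMap) ?_).2 hs
    rw [Module.finrank_tensorProduct, Module.finrank_linearMap,
      (MulOpposite.opLinearEquiv F : A ≃ₗ[F] Aᵐᵒᵖ).finrank_eq]

end CentralSimple

section TensorSimple

variable {F A B : Type*} [Field F] [Ring A] [Algebra F A] [Ring B] [Algebra F B]

theorem exists_eq_sum_mul_mul [IsAzumaya F A] (φ : Module.End F A) :
    ∃ s : Finset (A × Aᵐᵒᵖ), ∀ x, φ x = ∑ p ∈ s, p.1 * x * p.2.unop := by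
  obtain ⟨t, rfl⟩ := (IsAzumaya.AlgHom.mulLeftRight_bij F A).2 φ
  obtain ⟨s, rfl⟩ := TensorProduct.exists_finset t
  exact ⟨s, fun x ↦ by simp [LinearMap.sum_apply]⟩

theorem exists_lTensor_eq_sum_mul_mul [IsAzumaya F A] (φ : Module.End F A) :
    ∃ s : Finset (A × Aᵐᵒᵖ), ∀ z : B ⊗[F] A,
      φ.lTensor B z = ∑ p ∈ s, (1 ⊗ₜ p.1) * z * (1 ⊗ₜ p.2.unop) := by
  obtain ⟨s, hs⟩ := exists_eq_sum_mul_mul φ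
  refine ⟨s, fun z ↦ ?_⟩
  induction z with
  | zero => simp
  | tmul b a => simp [hs, TensorProduct.tmul_sum]
  | add x y hx hy => simp [mul_add, add_mul, Finset.sum_add_distrib, hx, hy]

theorem lTensor_smulRight_one (f : A →ₗ[F] F) (z : B ⊗[F] A) :
    (f.smulRight (1 : A)).lTensor B z = TensorProduct.rid F B (f.lTensor B z) ⊗ₜ 1 := by
  induction z with
  | zero => simp
  | tmul b a => simp [TensorProduct.smul_tmul]
  | add x y hx hy => simp [hx, hy, TensorProduct.add_tmul]

theorem exists_lTensor_ne_zero {z : B ⊗[F] A} (hz : z ≠ 0) :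
    ∃ f : A →ₗ[F] F, f.lTensor B z ≠ 0 := by
  let b := Module.Free.chooseBasis F A
  have repr_eq (k) (w : B ⊗[F] A) : (Algebra.TensorProduct.basis B b).repr w k =
      TensorProduct.rid F B ((b.coord k).lTensor B w) := by
    induction w with
    | zero => simp
    | tmul x a => simp [Algebra.smul_def, Algebra.commutes]
    | add x y hx hy => simp [hx, hy]
  by_contra! h
  exact hz ((Algebra.TensorProduct.basis B b).ext_elem fun k ↦ by simp [repr_eq, h])

theorem isSimpleRing_tensorProduct [IsAzumaya F A] [Nontrivial A] [IsSimpleRing B] :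
    IsSimpleRing (B ⊗[F] A) := by
  refine .of_eq_bot_or_eq_top fun I ↦ or_iff_not_imp_left.2 fun hI ↦ ?_
  obtain ⟨z, hz, hz0⟩ : ∃ z ∈ I, z ≠ 0 := by
    by_contra! h
    exact hI (eq_bot_iff.2 fun x hx ↦ by simpa using h x hx)
  obtain ⟨f, hf⟩ := exists_lTensor_ne_zero hz0
  let i : B →ₐ[F] B ⊗[F] A := Algebra.TensorProduct.includeLeft
  have contraction_mem : TensorProduct.rid F B (f.lTensor B z) ∈ I.comap i := by
    obtain ⟨s, hs⟩ := exists_lTensor_eq_sum_mul_mul (B := B) (f.smulRight (1 : A))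
    rw [TwoSidedIdeal.mem_comap, Algebra.TensorProduct.includeLeft_apply, ← lTensor_smulRight_one,
      hs]
    exact sum_mem fun p _ ↦ I.mul_mem_right _ _ (I.mul_mem_left _ _ hz)
  have comap_eq_top : I.comap i = ⊤ := (eq_bot_or_eq_top _).resolve_left fun h ↦ hf <| by
    simpa [h, TwoSidedIdeal.mem_bot] using contraction_mem
  rw [← TwoSidedIdeal.one_mem_iff, TwoSidedIdeal.mem_comap, map_one] at comap_eq_top
  exact (TwoSidedIdeal.one_mem_iff I).1 comap_eq_top

theorem isCentral_tensorProduct {K : Type*} [Field K] [Algebra F K] [Algebra K B]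
    [IsScalarTower F K B] [IsAzumaya F A] [Nontrivial A] [Algebra.IsCentral K B] :
    Algebra.IsCentral K (B ⊗[F] A) where
  out z hz := by
    rw [Subalgebra.mem_center_iff] at hz
    obtain ⟨f, hf⟩ := Module.Projective.exists_dual_eq_one F (one_ne_zero (α := A))
    obtain ⟨s, hs⟩ := exists_lTensor_eq_sum_mul_mul (B := B) (f.smulRight (1 : A))
    set y := TensorProduct.rid F B (f.lTensor B z)
    have hzy : z = y ⊗ₜ[F] 1 := by
      rw [← lTensor_smulRight_one, hs]
      calc z = z * (f.smulRight (1 : A)).lTensor B 1 := by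
            rw [Algebra.TensorProduct.one_def, LinearMap.lTensor_tmul, LinearMap.smulRight_apply,
              hf, one_smul, ← Algebra.TensorProduct.one_def, mul_one]
        _ = ∑ p ∈ s, (1 ⊗ₜ p.1) * z * (1 ⊗ₜ p.2.unop) := by
            rw [hs, Finset.mul_sum]
            exact Finset.sum_congr rfl fun p _ ↦ by rw [mul_one, ← mul_assoc, hz]
    have hy : y ∈ Subalgebra.center K B := Subalgebra.mem_center_iff.2 fun b ↦
      Algebra.TensorProduct.includeLeft_injective (S := F) (algebraMap F A).injective <| by
        simpa [hzy] using hz (b ⊗ₜ 1)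
    obtain ⟨c, hc⟩ := (Algebra.IsCentral.mem_center_iff K).1 hy
    exact ⟨c, by simp [hzy, hc]⟩

end TensorSimple

section TensorPower

variable {F A : Type u} [Field F] [Ring A] [Algebra F A]

theorem nonempty_tpow_zero_algEquiv : Nonempty (tpow F A 0 ≃ₐ[F] F) :=
  let e := PiTensorProduct.isEmptyEquiv (R := F) (s := fun _ : Fin 0 ↦ A) (Fin 0)
  have map_one : e 1 = 1 := PiTensorProduct.isEmptyEquiv_apply_tprod (Fin 0) 1
  have map_mul (x y) : e (x * y) = e x * e y := by
    obtain ⟨r, rfl⟩ := e.symm.surjective x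
    obtain ⟨s, rfl⟩ := e.symm.surjective y
    simp [e, Subsingleton.elim (isEmptyElim * isEmptyElim : Fin 0 → A) isEmptyElim, mul_comm]
  ⟨.ofLinearEquiv e map_one map_mul⟩

theorem nonempty_tpow_succ_algEquiv (k : ℕ) :
    Nonempty (tpow F A (k + 1) ≃ₐ[F] tpow F A k ⊗[F] A) :=
  let e : tpow F A (k + 1) ≃ₗ[F] tpow F A k ⊗[F] A :=
    (PiTensorProduct.reindex F (fun _ ↦ A) finSumFinEquiv.symm).trans <|
    (PiTensorProduct.tmulEquiv F A).symm.trans <|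
    TensorProduct.congr (.refl F _) (PiTensorProduct.subsingletonEquiv 0)
  have tprod_eq (f : Fin (k + 1) → A) : e (PiTensorProduct.tprod F f) =
      (⨂ₜ[F] i, f (Fin.castSucc i)) ⊗ₜ f (Fin.last k) := by
    simp only [e, LinearEquiv.trans_apply, PiTensorProduct.reindex_tprod,
      PiTensorProduct.tmulEquiv_symm_apply, TensorProduct.congr_tmul, LinearEquiv.refl_apply,
      PiTensorProduct.subsingletonEquiv_apply_tprod]
    rfl
  have map_one : e 1 = 1 := tprod_eq 1
  have map_mul (x y) : e (x * y) = e x * e y := by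
    induction x using PiTensorProduct.induction_on with
    | add x x' hx hx' => simp only [add_mul, map_add, hx, hx']
    | smul_tprod r f =>
      induction y using PiTensorProduct.induction_on with
      | add y y' hy hy' => simp only [mul_add, map_add, hy, hy']
      | smul_tprod s g =>
        simp only [smul_mul_assoc, mul_smul_comm, map_smul, PiTensorProduct.tprod_mul_tprod,
          tprod_eq, Algebra.TensorProduct.tmul_mul_tmul]
        rfl
  ⟨.ofLinearEquiv e map_one map_mul⟩

end TensorPower

end Amitsur

namespace IsCSA

variable {F A B : Type u} [Field F] [Ring A] [Algebra F A] [Ring B] [Algebra F B]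

theorem self : IsCSA F F := ⟨inferInstance, inferInstance, inferInstance⟩

theorem congr (hA : IsCSA F A) (e : A ≃ₐ[F] B) : IsCSA F B :=
  have ⟨_, _, _⟩ := hA
  ⟨.of_algEquiv F A B e, ‹IsSimpleRing A›.of_ringEquiv e.toRingEquiv,
    .of_surjective e.toLinearMap e.surjective⟩

theorem tensorProduct (hA : IsCSA F A) (hB : IsCSA F B) : IsCSA F (A ⊗[F] B) :=
  have ⟨_, _, _⟩ := hA
  have ⟨_, _, _⟩ := hB
  ⟨Amitsur.isCentral_tensorProduct, Amitsur.isSimpleRing_tensorProduct, inferInstance⟩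

theorem op (hA : IsCSA F A) : IsCSA F Aᵐᵒᵖ :=
  have ⟨_, _, _⟩ := hA
  ⟨inferInstance, inferInstance, .of_surjective _ (MulOpposite.opLinearEquiv F).surjective⟩

theorem tpow (hA : IsCSA F A) (k : ℕ) : IsCSA F (tpow F A k) := by
  induction k with
  | zero => exact self.congr Amitsur.nonempty_tpow_zero_algEquiv.some.symm
  | succ k ih =>
    obtain ⟨e⟩ := Amitsur.nonempty_tpow_succ_algEquiv (F := F) (A := A) k
    exact (ih.tensorProduct hA).congr e.symm

theorem nonempty_tensor_op_algEquiv (hA : IsCSA F A) :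
    Nonempty (A ⊗[F] Aᵐᵒᵖ ≃ₐ[F]
      Matrix (Fin (Module.finrank F A)) (Fin (Module.finrank F A)) F) :=
  have ⟨_, _, _⟩ := hA
  ⟨(AlgEquiv.ofBijective _ (IsAzumaya.AlgHom.mulLeftRight_bij F A)).trans
    (algEquivMatrix (Module.finBasis F A))⟩

theorem brauerEquiv_of_isSplit (hB : IsCSA F B) (h : IsSplit F (A ⊗[F] Bᵐᵒᵖ)) :
    BrauerEquiv F A B := by
  obtain ⟨n, hn, ⟨e⟩⟩ := h
  obtain ⟨e'⟩ := hB.nonempty_tensor_op_algEquiv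
  have ⟨_, _, _⟩ := hB
  refine ⟨_, n, Module.finrank_pos (R := F) (M := B), hn, ⟨?_⟩⟩
  exact (matrixEquivTensor _ F A).trans <|
    (Algebra.TensorProduct.congr .refl
      (e'.symm.trans (Algebra.TensorProduct.comm F B Bᵐᵒᵖ))).trans <|
    (Algebra.TensorProduct.assoc F F F A Bᵐᵒᵖ B).symm.trans <|
    (Algebra.TensorProduct.congr e .refl).trans <|
    (Algebra.TensorProduct.comm F _ B).trans (matrixEquivTensor _ F B).symm

end IsCSA

/-! ### Splitting by a matrix representation -/

namespace Amitsur

section Representation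

variable {F A E : Type*} [Field F] [Ring A] [Algebra F A] [Field E] [Algebra F E]
  [Algebra.IsCentral F A] [IsSimpleRing A] [FiniteDimensional F A]

theorem exists_baseChange_algEquiv {R : Type*} [Ring R] [Algebra F R] [Algebra E R]
    [IsScalarTower F E R] (ρ : A →ₐ[F] R) (h : Module.finrank E R = Module.finrank F A) :
    ∃ e : E ⊗[F] A ≃ₐ[E] R, ∀ a, e (1 ⊗ₜ a) = ρ a := by
  have finrank_pos : 0 < Module.finrank E R := h ▸ Module.finrank_pos
  have := Module.finite_of_finrank_pos finrank_pos
  have := Module.nontrivial_of_finrank_pos finrank_pos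
  have := isSimpleRing_tensorProduct (F := F) (A := A) (B := E)
  have commute (x : E) (y : A) : Commute (Algebra.ofId E R x) (ρ y) := Algebra.commutes x (ρ y)
  let f : E ⊗[F] A →ₐ[E] R := Algebra.TensorProduct.lift (Algebra.ofId E R) ρ commute
  have f_injective : Function.Injective f.toLinearMap := (f : E ⊗[F] A →+* R).injective
  have f_surjective := (LinearMap.injective_iff_surjective_of_finrank_eq_finrank
    (by rw [h, Module.finrank_baseChange])).1 f_injective
  exact ⟨.ofBijective f ⟨f_injective, f_surjective⟩, fun a ↦
    (Algebra.TensorProduct.lift_tmul _ ρ commute 1 a).trans (by simp)⟩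

variable {ι : Type*} [Fintype ι] [DecidableEq ι]

theorem exists_baseChange_algEquiv_matrix (ρ : A →ₐ[F] Matrix ι ι E)
    (h : Fintype.card ι ^ 2 = Module.finrank F A) :
    ∃ e : E ⊗[F] A ≃ₐ[E] Matrix ι ι E, ∀ a, e (1 ⊗ₜ a) = ρ a :=
  exists_baseChange_algEquiv ρ (by simp [Module.finrank_matrix, ← h, sq])

theorem exists_units_mul_eq_mul (e : Matrix ι ι E ≃ₐ[E] Matrix ι ι E) :
    ∃ P : (Matrix ι ι E)ˣ, ∀ X, e X * P = P * X := by
  let T : Matrix ι ι E ≃ₐ[E] Module.End E (ι → E) := Matrix.toLinAlgEquiv'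
  obtain ⟨f, hf⟩ := LinearEquiv.conjAlgEquiv_surjective E (ι → E) (ι → E)
    ((T.symm.trans e).trans T)
  have T_apply (X) : T (e X) = f.conjAlgEquiv E (T X) := by simp [hf]
  let P : (Module.End E (ι → E))ˣ := LinearMap.GeneralLinearGroup.ofLinearEquiv f
  have T_mul (X) : T (e X) * P = P * T X := by
    rw [T_apply]
    refine LinearMap.ext fun v ↦ ?_
    change f.conjAlgEquiv E (T X) (f v) = f (T X v)
    simp [LinearEquiv.conjAlgEquiv_apply]
  refine ⟨Units.map T.symm.toMonoidHom P, fun X ↦ T.injective ?_⟩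
  simpa using T_mul X

/-- **Skolem–Noether**. -/
theorem exists_units_mul_eq_mul_of_card_sq_eq (ρ ρ' : A →ₐ[F] Matrix ι ι E)
    (h : Fintype.card ι ^ 2 = Module.finrank F A) :
    ∃ P : (Matrix ι ι E)ˣ, ∀ x, ρ' x * P = P * ρ x := by
  obtain ⟨e, he⟩ := exists_baseChange_algEquiv_matrix ρ h
  obtain ⟨e', he'⟩ := exists_baseChange_algEquiv_matrix ρ' h
  obtain ⟨P, hP⟩ := exists_units_mul_eq_mul (e.symm.trans e')
  exact ⟨P, fun x ↦ by simpa [← he, he'] using hP (ρ x)⟩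

theorem exists_eq_smul_one_of_forall_commute (ρ : A →ₐ[F] Matrix ι ι E)
    (h : Fintype.card ι ^ 2 = Module.finrank F A) {M : Matrix ι ι E}
    (hM : ∀ x, Commute M (ρ x)) : ∃ c : E, M = c • 1 := by
  obtain ⟨e, he⟩ := exists_baseChange_algEquiv_matrix ρ h
  have commute (z : E ⊗[F] A) : Commute M (e z) := by
    induction z with
    | zero => simp
    | tmul c x =>
      have : c ⊗ₜ x = c • ((1 : E) ⊗ₜ[F] x) := by simp [TensorProduct.smul_tmul']
      rw [this, map_smul, he]
      exact (hM x).smul_right c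
    | add y z hy hz => rw [map_add]; exact hy.add_right hz
  obtain ⟨c, hc⟩ := (Algebra.IsCentral.mem_center_iff E).1 <|
    Subalgebra.mem_center_iff.2 fun X ↦ by
      simpa using (commute (e.symm X)).symm.eq
  exact ⟨c, by rw [hc, Algebra.algebraMap_eq_smul_one]⟩

end Representation

/-- The field extension `E` of `F` splits `A`, expressed through a representation of `A` by
matrices over `E` whose degree is the square root of `dim A`. For a central simple algebra this is
the same as `E ⊗[F] A` being a matrix algebra. -/
def SplitsOver (F A E : Type*) [Field F] [Ring A] [Algebra F A] [Field E] [Algebra F E] : Prop :=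
  ∃ n : ℕ, n ^ 2 = Module.finrank F A ∧ Nonempty (A →ₐ[F] Matrix (Fin n) (Fin n) E)

namespace SplitsOver

variable {F A E : Type*} [Field F] [Ring A] [Algebra F A] [Field E] [Algebra F E]

theorem of_matrix {ι : Type*} [Fintype ι] [DecidableEq ι] (ρ : A →ₐ[F] Matrix ι ι E)
    (h : Fintype.card ι ^ 2 = Module.finrank F A) : SplitsOver F A E :=
  ⟨_, h, ⟨(Matrix.reindexAlgEquiv F E (Fintype.equivFin ι)).toAlgHom.comp ρ⟩⟩

theorem of_end {W : Type*} [AddCommGroup W] [Module E W] [Module F W] [IsScalarTower F E W]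
    [Module.Finite E W] (ρ : A →ₐ[F] Module.End E W)
    (h : Module.finrank E W ^ 2 = Module.finrank F A) : SplitsOver F A E :=
  ⟨_, h, ⟨((algEquivMatrix (Module.finBasis E W)).toAlgHom.restrictScalars F).comp ρ⟩⟩

theorem mono {K : Type*} [Field K] [Algebra F K] (h : SplitsOver F A E) (f : E →ₐ[F] K) :
    SplitsOver F A K :=
  have ⟨n, hn, ⟨ρ⟩⟩ := h
  ⟨n, hn, ⟨f.mapMatrix.comp ρ⟩⟩

end SplitsOver

theorem splitsOver_of_isSplit {F A E : Type u} [Field F] [Ring A] [Algebra F A] [Field E]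
    [Algebra F E] (h : IsSplit E (E ⊗[F] A)) : SplitsOver F A E := by
  obtain ⟨n, _, ⟨e⟩⟩ := h
  refine ⟨n, ?_, ⟨(e.toAlgHom.restrictScalars F).comp Algebra.TensorProduct.includeRight⟩⟩
  simpa [sq, Module.finrank_matrix] using e.toLinearEquiv.finrank_eq.symm

end Amitsur

theorem IsCSA.isSplit_iff_splitsOver {F A E : Type u} [Field F] [Ring A] [Algebra F A] [Field E]
    [Algebra F E] (hA : IsCSA F A) : IsSplit E (E ⊗[F] A) ↔ Amitsur.SplitsOver F A E := by
  refine ⟨Amitsur.splitsOver_of_isSplit, fun ⟨n, hn, ⟨ρ⟩⟩ ↦ ?_⟩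
  have ⟨_, _, _⟩ := hA
  obtain ⟨e, -⟩ := Amitsur.exists_baseChange_algEquiv_matrix ρ (by simpa using hn)
  have n_ne_zero : n ≠ 0 := fun h ↦ (Module.finrank_pos (R := F) (M := A)).ne (by simp [← hn, h])
  exact ⟨n, Nat.pos_of_ne_zero n_ne_zero, ⟨e⟩⟩

namespace Amitsur

/-! ### Galois descent -/

section Descent

variable {G K : Type*} [Group G] [Field K] [MulSemiringAction G K]

/-- A finite group of automorphisms of `K` averages to nonzero maps, by Dedekind's independence of
characters. -/
theorem span_fixed_eq_top [Finite G] [FaithfulSMul G K] {V : Type*} [AddCommGroup V] [Module K V]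
    (T : G →* AddMonoid.End V) (hT : ∀ σ (k : K) v, T σ (k • v) = (σ • k) • T σ v) :
    Submodule.span K {v | ∀ σ, T σ v = v} = ⊤ := by
  cases nonempty_fintype G
  by_contra hne
  obtain ⟨φ, hφ, hle⟩ := Submodule.exists_le_ker_of_lt_top _ (lt_top_iff_ne_top.2 hne)
  have trace_mem (v : V) : φ (∑ σ, T σ v) = 0 := hle <| Submodule.subset_span fun τ ↦ by
    rw [map_sum, ← Equiv.sum_comp (Equiv.mulLeft τ) fun σ ↦ T σ v]
    simp
  let χ (σ : G) : K →* K := MulSemiringAction.toRingHom G K σ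
  have χ_injective : Function.Injective χ := fun σ τ h ↦
    eq_of_smul_eq_smul fun k ↦ DFunLike.congr_fun h k
  have χ_independent := Fintype.linearIndependent_iff.1
    ((linearIndependent_monoidHom K K).comp χ χ_injective)
  refine hφ (LinearMap.ext fun v ↦ ?_)
  have := χ_independent (fun σ ↦ φ (T σ v)) (funext fun k ↦ ?_) 1
  · simpa using this
  · simpa [hT, χ, mul_comm] using trace_mem (k • v)

variable {ι : Type*} [Fintype ι]

theorem smul_mulVec (σ : G) (M : Matrix ι ι K) (v : ι → K) :
    σ • M.mulVec v = (σ • M).mulVec (σ • v) := by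
  ext i
  simp [Matrix.mulVec, dotProduct, Finset.smul_sum, smul_mul']

variable [DecidableEq ι]

/-- A group acting on `K` acts on matrices over `K` entrywise. -/
instance : MulSemiringAction G (Matrix ι ι K) where
  smul_one σ := by ext i j; simp [Matrix.one_apply, smul_ite]
  smul_mul σ M N := by
    ext i j
    simp [Matrix.mul_apply, Finset.smul_sum, smul_mul']

/-- **Hilbert 90** for `GL_n`. -/
theorem exists_units_mul_smul_eq [Finite G] [FaithfulSMul G K] (c : G → Matrix ι ι K)
    (map_one : c 1 = 1) (map_mul : ∀ σ τ, c (σ * τ) = c σ * σ • c τ) :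
    ∃ P : (Matrix ι ι K)ˣ, ∀ σ, c σ * σ • (P : Matrix ι ι K) = P := by
  let T : G →* AddMonoid.End (ι → K) :=
    { toFun σ := ((c σ).mulVecLin.toAddMonoidHom).comp (DistribSMul.toAddMonoidHom _ σ)
      map_one' := AddMonoidHom.ext fun v ↦
        show (c 1).mulVec ((1 : G) • v) = v by simp [map_one]
      map_mul' σ τ := AddMonoidHom.ext fun v ↦
        show (c (σ * τ)).mulVec ((σ * τ) • v) = (c σ).mulVec (σ • (c τ).mulVec (τ • v)) by
          simp [map_mul, smul_mulVec, mul_smul] }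
  have T_apply (σ v) : T σ v = (c σ).mulVec (σ • v) := rfl
  obtain ⟨b, hbT, hb_span, hb_indep⟩ := exists_linearIndependent K {v | ∀ σ, T σ v = v}
  rw [span_fixed_eq_top T fun σ k v ↦ by
    rw [T_apply, T_apply, ← Matrix.mulVec_smul]; congr 1; ext; simp] at hb_span
  let B : Module.Basis b K (ι → K) := .mk hb_indep (by simp [hb_span])
  let e : ι ≃ b := (Pi.basisFun K ι).indexEquiv B
  have isUnit : IsUnit (Matrix.of fun i ↦ (e i : ι → K)) :=
    Matrix.linearIndependent_rows_iff_isUnit.1 (hb_indep.comp e e.injective)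
  refine ⟨((Matrix.isUnit_transpose _).2 isUnit).unit, fun σ ↦ ?_⟩
  ext i j
  exact congrFun (hbT (e j).2 σ) i

variable {F A N : Type*} [Field F] [Ring A] [Algebra F A] [CommRing N] [Algebra F N]
  [Algebra F K] [Algebra N K] [IsScalarTower F N K] [FaithfulSMul N K]

theorem nonempty_algHom_of_mem_range (ρ : A →ₐ[F] Matrix ι ι K)
    (h : ∀ x i j, ρ x i j ∈ Set.range (algebraMap N K)) :
    Nonempty (A →ₐ[F] Matrix ι ι N) := by
  let m : Matrix ι ι N →ₐ[F] Matrix ι ι K := (IsScalarTower.toAlgHom F N K).mapMatrix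
  have m_injective : Function.Injective m :=
    Matrix.map_injective (FaithfulSMul.algebraMap_injective N K)
  have mem_range (x) : ρ x ∈ m.range := by
    choose y hy using h x
    exact ⟨y, Matrix.ext hy⟩
  exact ⟨(AlgEquiv.ofInjective m m_injective).symm.toAlgHom.comp (ρ.codRestrict _ mem_range)⟩

theorem nonempty_algHom_of_smul_eq [Algebra.IsInvariant N K G] (ρ : A →ₐ[F] Matrix ι ι K)
    (h : ∀ σ : G, ∀ x, σ • ρ x = ρ x) : Nonempty (A →ₐ[F] Matrix ι ι N) :=
  nonempty_algHom_of_mem_range ρ fun x i j ↦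
    Algebra.IsInvariant.isInvariant (G := G) (ρ x i j) fun σ ↦ congrFun₂ (h σ x) i j

end Descent

/-! ### Factor sets -/

theorem nonempty_of_card_sq_eq_finrank {F A ι : Type*} [Field F] [Ring A] [Algebra F A]
    [Nontrivial A] [FiniteDimensional F A] [Fintype ι]
    (h : Fintype.card ι ^ 2 = Module.finrank F A) : Nonempty ι :=
  Fintype.card_pos_iff.1 <| Nat.pos_of_ne_zero fun card_eq_zero ↦
    (Module.finrank_pos (R := F) (M := A)).ne (by simp [← h, card_eq_zero])

section Intertwine

variable {F A E : Type*} [Field F] [Ring A] [Algebra F A] [Field E] [Algebra F E]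
  [Algebra.IsCentral F A] [IsSimpleRing A] [FiniteDimensional F A]
  {ι : Type*} [Fintype ι] [DecidableEq ι]

theorem exists_units_smul_eq_of_intertwine {ρ ρ' : A →ₐ[F] Matrix ι ι E}
    (h : Fintype.card ι ^ 2 = Module.finrank F A) {X Y : (Matrix ι ι E)ˣ}
    (hX : ∀ x, X * ρ x = ρ' x * X) (hY : ∀ x, Y * ρ x = ρ' x * Y) :
    ∃ u : Eˣ, (X : Matrix ι ι E) = u • (Y : Matrix ι ι E) := by
  have commute (x) : Commute ((Y⁻¹ * X : (Matrix ι ι E)ˣ) : Matrix ι ι E) (ρ x) := by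
    rw [commute_iff_eq, Units.val_mul, mul_assoc, hX, Units.inv_mul_eq_iff_eq_mul, ← mul_assoc,
      ← mul_assoc, hY, Units.mul_inv_cancel_right]
  obtain ⟨z, hz⟩ := exists_eq_smul_one_of_forall_commute ρ h commute
  have := nonempty_of_card_sq_eq_finrank h
  have z_ne_zero : z ≠ 0 := fun hz0 ↦ (Y⁻¹ * X).ne_zero (by rw [hz, hz0, zero_smul])
  refine ⟨Units.mk0 z z_ne_zero, ?_⟩
  rw [Units.val_mul, Units.inv_mul_eq_iff_eq_mul] at hz
  simpa [Units.smul_def] using hz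

end Intertwine

section Coboundary

variable {G K : Type*} [Group G] [Field K] [MulSemiringAction G K]

/-- A two-variable function `G → G → Kˣ` is a coboundary. Factor sets are compared only up to
coboundaries, so the cocycle condition itself is never needed. -/
def IsCoboundary (a : G → G → Kˣ) : Prop :=
  ∃ e : G → Kˣ, ∀ σ τ, (a σ τ : K) * e (σ * τ) = e σ * σ • (e τ : K)

end Coboundary

/-- A representation of `A` by matrices over `K`, of degree the square root of `dim A`, together
with matrices intertwining it with its conjugates under a group `G` acting on `K`. The function
`a` is the *factor set* by which these matrices fail to be multiplicative. -/
structure TwistedRep (F A ι : Type*) {G K : Type*} [Field F] [Ring A] [Algebra F A] [Fintype ι]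
    [DecidableEq ι] [Group G] [Field K] [MulSemiringAction G K] [Algebra F K]
    (a : G → G → Kˣ) where
  rep : A →ₐ[F] Matrix ι ι K
  card_sq : Fintype.card ι ^ 2 = Module.finrank F A
  twist : G → (Matrix ι ι K)ˣ
  twist_mul_smul_rep : ∀ σ x, twist σ * σ • rep x = rep x * twist σ
  twist_mul_smul_twist : ∀ σ τ,
    (twist σ : Matrix ι ι K) * σ • (twist τ : Matrix ι ι K) = (a σ τ : K) • twist (σ * τ)

/-- `A` is split by `K` and `a` is a factor set of `A` with respect to the action of `G`
on `K`. -/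
def HasFactorSet (F A : Type*) {G K : Type*} [Field F] [Ring A] [Algebra F A]
    [Group G] [Field K] [MulSemiringAction G K] [Algebra F K] (a : G → G → Kˣ) : Prop :=
  ∃ n, Nonempty (TwistedRep F A (Fin n) a)

section Kronecker

open scoped Kronecker

variable {F A B K : Type*} [Field F] [Ring A] [Algebra F A] [Ring B] [Algebra F B] [Field K]
  [Algebra F K] {ι κ : Type*} [Fintype ι] [DecidableEq ι] [Fintype κ] [DecidableEq κ]

/-- The tensor product of two matrix representations. -/
def kroneckerRep (ρ : A →ₐ[F] Matrix ι ι K) (π : B →ₐ[F] Matrix κ κ K) :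
    A ⊗[F] B →ₐ[F] Matrix (ι × κ) (ι × κ) K :=
  ((Matrix.kroneckerAlgEquiv ι κ K).toAlgHom.restrictScalars F).comp <|
    ((Algebra.TensorProduct.mapOfCompatibleSMul K F K _ _).restrictScalars F).comp
      (Algebra.TensorProduct.map ρ π)

@[simp]
theorem kroneckerRep_tmul (ρ : A →ₐ[F] Matrix ι ι K) (π : B →ₐ[F] Matrix κ κ K) (x : A) (y : B) :
    kroneckerRep ρ π (x ⊗ₜ y) = ρ x ⊗ₖ π y := by
  simp [kroneckerRep]

end Kronecker

section MatrixAction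

variable {G K ι : Type*} [Group G] [Field K] [MulSemiringAction G K]

instance : SMulDistribClass G K (Matrix ι ι K) where
  smul_distrib_smul σ k M := by ext; simp

open scoped Kronecker in
theorem smul_kronecker' {κ : Type*} (σ : G) (M : Matrix ι ι K) (N : Matrix κ κ K) :
    σ • M ⊗ₖ N = (σ • M) ⊗ₖ (σ • N) := by
  ext
  simp

theorem mapMatrix_smul {L F : Type*} [Field F] [Algebra F K] [Field L] [Algebra F L]
    [MulSemiringAction G L] [Fintype ι] [DecidableEq ι] (f : K →ₐ[F] L)
    (hf : ∀ (σ : G) k, f (σ • k) = σ • f k) (σ : G) (M : Matrix ι ι K) :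
    f.mapMatrix (σ • M) = σ • f.mapMatrix M := by
  ext
  simp [hf]

end MatrixAction

section Operations

variable {F A B G K : Type*} [Field F] [Ring A] [Algebra F A] [Ring B] [Algebra F B]
  [Group G] [Field K] [MulSemiringAction G K] [Algebra F K]
  {ι κ : Type*} [Fintype ι] [DecidableEq ι] [Fintype κ] [DecidableEq κ] {a b : G → G → Kˣ}

namespace TwistedRep

/-- Renaming the index type of a twisted representation. -/
def reindex (T : TwistedRep F A ι a) (e : ι ≃ κ) : TwistedRep F A κ a where
  rep := (Matrix.reindexAlgEquiv F K e).toAlgHom.comp T.rep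
  card_sq := by rw [← Fintype.card_congr e, T.card_sq]
  twist σ := Units.map (Matrix.reindexAlgEquiv F K e) (T.twist σ)
  twist_mul_smul_rep σ x := by
    let φ := Matrix.reindexAlgEquiv F K e
    change φ (T.twist σ) * φ (σ • T.rep x) = φ (T.rep x) * φ (T.twist σ)
    rw [← map_mul, T.twist_mul_smul_rep, map_mul]
  twist_mul_smul_twist σ τ := by
    let φ := Matrix.reindexAlgEquiv K K e
    change φ (T.twist σ) * φ (σ • (T.twist τ : Matrix ι ι K)) = (a σ τ : K) • φ (T.twist (σ * τ))
    rw [← map_mul, T.twist_mul_smul_twist, map_smul]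

open scoped Kronecker in
/-- The tensor product of two twisted representations. -/
def tensorProduct (S : TwistedRep F A ι a) (T : TwistedRep F B κ b) :
    TwistedRep F (A ⊗[F] B) (ι × κ) (a * b) where
  rep := kroneckerRep S.rep T.rep
  card_sq := by rw [Fintype.card_prod, mul_pow, S.card_sq, T.card_sq, Module.finrank_tensorProduct]
  twist σ :=
    { val := (S.twist σ : Matrix ι ι K) ⊗ₖ (T.twist σ : Matrix κ κ K)
      inv := ((S.twist σ)⁻¹ : (Matrix ι ι K)ˣ) ⊗ₖ ((T.twist σ)⁻¹ : (Matrix κ κ K)ˣ)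
      val_inv := by simp [← Matrix.mul_kronecker_mul]
      inv_val := by simp [← Matrix.mul_kronecker_mul] }
  twist_mul_smul_rep σ x := by
    induction x with
    | zero => simp
    | tmul x y =>
      simp [smul_kronecker', ← Matrix.mul_kronecker_mul, S.twist_mul_smul_rep, T.twist_mul_smul_rep]
    | add x y hx hy => rw [map_add, smul_add, mul_add, add_mul, hx, hy]
  twist_mul_smul_twist σ τ := by
    simp [smul_kronecker', ← Matrix.mul_kronecker_mul, S.twist_mul_smul_twist,
      T.twist_mul_smul_twist, Matrix.smul_kronecker, Matrix.kronecker_smul, smul_smul,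
      mul_comm]

/-- The transposed twisted representation of the opposite algebra. -/
def op (T : TwistedRep F A ι a) : TwistedRep F Aᵐᵒᵖ ι a⁻¹ where
  rep := (Matrix.transposeAlgEquiv ι F K).symm.toAlgHom.comp (AlgHom.op T.rep)
  card_sq := by rw [T.card_sq, (MulOpposite.opLinearEquiv F).finrank_eq]
  twist σ :=
    { val := ((T.twist σ)⁻¹ : (Matrix ι ι K)ˣ).1.transpose
      inv := (T.twist σ).1.transpose
      val_inv := by simp [← Matrix.transpose_mul]
      inv_val := by simp [← Matrix.transpose_mul] }
  twist_mul_smul_rep σ x := by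
    change ((T.twist σ)⁻¹ : (Matrix ι ι K)ˣ).1.transpose * (σ • T.rep x.unop).transpose =
      (T.rep x.unop).transpose * ((T.twist σ)⁻¹ : (Matrix ι ι K)ˣ).1.transpose
    rw [← Matrix.transpose_mul, ← Matrix.transpose_mul]
    refine congrArg _ ((Units.eq_inv_mul_iff_mul_eq _).2 ?_)
    rw [← mul_assoc, T.twist_mul_smul_rep, Units.mul_inv_cancel_right]
  twist_mul_smul_twist σ τ := by
    have twist_inv : σ • ((T.twist τ)⁻¹ : (Matrix ι ι K)ˣ).1 * ((T.twist σ)⁻¹ : (Matrix ι ι K)ˣ).1 =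
        (a σ τ • T.twist (σ * τ))⁻¹.1 := by
      refine Units.eq_inv_of_mul_eq_one_left ?_
      rw [Units.val_smul, Units.smul_def, ← T.twist_mul_smul_twist, mul_assoc,
        ← mul_assoc (σ • _), ← smul_mul', Units.mul_inv, smul_one, one_mul, Units.mul_inv]
    rw [Units.smul_inv] at twist_inv
    simpa [Units.smul_def] using congrArg Matrix.transpose twist_inv

/-- The trivial representation of the base field. -/
def self [SMulCommClass G F K] : TwistedRep F F (Fin 1) (1 : G → G → Kˣ) where
  rep := Algebra.ofId F _
  card_sq := by simp
  twist _ := 1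
  twist_mul_smul_rep σ x := by simp [Algebra.ofId_apply]
  twist_mul_smul_twist σ τ := by simp

/-- Transport along an isomorphism of algebras. -/
def congr (T : TwistedRep F A ι a) (e : A ≃ₐ[F] B) : TwistedRep F B ι a where
  rep := T.rep.comp e.symm.toAlgHom
  card_sq := by rw [T.card_sq, e.toLinearEquiv.finrank_eq]
  twist := T.twist
  twist_mul_smul_rep σ x := T.twist_mul_smul_rep σ (e.symm x)
  twist_mul_smul_twist := T.twist_mul_smul_twist

/-- Extension of scalars along an equivariant homomorphism of fields. -/
def map {L : Type*} [Field L] [MulSemiringAction G L] [Algebra F L] (T : TwistedRep F A ι a)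
    (f : K →ₐ[F] L) (hf : ∀ (σ : G) k, f (σ • k) = σ • f k) :
    TwistedRep F A ι fun σ τ ↦ Units.map (f : K →* L) (a σ τ) where
  rep := f.mapMatrix.comp T.rep
  card_sq := T.card_sq
  twist σ := Units.map (f.mapMatrix (m := ι)).toRingHom.toMonoidHom (T.twist σ)
  twist_mul_smul_rep σ x := by
    have := congrArg f.mapMatrix (T.twist_mul_smul_rep σ x)
    rwa [map_mul, map_mul, mapMatrix_smul _ hf] at this
  twist_mul_smul_twist σ τ := by
    have := congrArg f.mapMatrix (T.twist_mul_smul_twist σ τ)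
    rw [map_mul, mapMatrix_smul _ hf] at this
    refine this.trans ?_
    ext
    simp

end TwistedRep

end Operations

section FactorSet

variable {F A B G K : Type*} [Field F] [Ring A] [Algebra F A] [Ring B] [Algebra F B]
  [Group G] [Field K] [MulSemiringAction G K] [Algebra F K] {a b : G → G → Kˣ}

theorem TwistedRep.hasFactorSet {ι : Type*} [Fintype ι] [DecidableEq ι]
    (T : TwistedRep F A ι a) : HasFactorSet F A a :=
  ⟨_, ⟨T.reindex (Fintype.equivFin ι)⟩⟩

theorem TwistedRep.isCoboundary_div [Algebra.IsCentral F A] [IsSimpleRing A]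
    [FiniteDimensional F A] [SMulCommClass G F K] {ι : Type*} [Fintype ι] [DecidableEq ι]
    (S : TwistedRep F A ι a) (T : TwistedRep F A ι b) : IsCoboundary (a / b) := by
  obtain ⟨P, hP⟩ := exists_units_mul_eq_mul_of_card_sq_eq T.rep S.rep S.card_sq
  have := nonempty_of_card_sq_eq_finrank S.card_sq
  have exists_eq_smul (σ : G) : ∃ e : Kˣ,
      (S.twist σ : Matrix ι ι K) * σ • (P : Matrix ι ι K) = (e : K) • (P * T.twist σ) := by
    let σP : (Matrix ι ι K)ˣ := Units.map (MulSemiringAction.toRingHom G _ σ).toMonoidHom P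
    refine exists_units_smul_eq_of_intertwine (X := S.twist σ * σP) (Y := P * T.twist σ)
      (ρ := (MulSemiringAction.toAlgHom F _ σ).comp T.rep) (ρ' := S.rep) S.card_sq ?_ ?_
    · intro x
      change S.twist σ * σ • (P : Matrix ι ι K) * σ • T.rep x =
        S.rep x * (S.twist σ * σ • (P : Matrix ι ι K))
      rw [mul_assoc, ← smul_mul', ← hP, smul_mul', ← mul_assoc, S.twist_mul_smul_rep, mul_assoc]
    · intro x
      change P * T.twist σ * σ • T.rep x = S.rep x * (P * T.twist σ)
      rw [mul_assoc, T.twist_mul_smul_rep, ← mul_assoc, ← hP, mul_assoc]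
  choose e he using exists_eq_smul
  have smul_eq_smul (σ τ) : (a σ τ * e (σ * τ) : K) • (P * T.twist (σ * τ)).1 =
      (b σ τ * (e σ * σ • (e τ : K))) • (P * T.twist (σ * τ)).1 :=
    calc (a σ τ * e (σ * τ) : K) • (P * T.twist (σ * τ)).1
      _ = S.twist σ * σ • (S.twist τ * τ • (P : Matrix ι ι K)) := by
        rw [mul_smul, Units.val_mul, ← he, ← smul_mul_assoc, ← S.twist_mul_smul_twist, mul_smul,
          smul_mul', mul_assoc]
      _ = (e σ * σ • (e τ : K)) • (P * (T.twist σ * σ • (T.twist τ : Matrix ι ι K))) := by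
        rw [he, smul_distrib_smul, smul_mul', Matrix.mul_smul, ← mul_assoc, he, smul_mul_assoc,
          smul_smul, mul_assoc, mul_comm (e σ : K)]
      _ = (b σ τ * (e σ * σ • (e τ : K))) • (P * T.twist (σ * τ)).1 := by
        rw [T.twist_mul_smul_twist, Matrix.mul_smul, smul_smul, mul_comm (b σ τ : K), Units.val_mul]
  refine ⟨e, fun σ τ ↦ ?_⟩
  have := smul_left_injective K (P * T.twist (σ * τ)).ne_zero (smul_eq_smul σ τ)
  simpa [field] using this

namespace HasFactorSet

theorem congr (h : HasFactorSet F A a) (e : A ≃ₐ[F] B) : HasFactorSet F B a :=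
  have ⟨_, ⟨T⟩⟩ := h
  (T.congr e).hasFactorSet

theorem tensorProduct (ha : HasFactorSet F A a) (hb : HasFactorSet F B b) :
    HasFactorSet F (A ⊗[F] B) (a * b) :=
  have ⟨_, ⟨S⟩⟩ := ha
  have ⟨_, ⟨T⟩⟩ := hb
  (S.tensorProduct T).hasFactorSet

theorem op (h : HasFactorSet F A a) : HasFactorSet F Aᵐᵒᵖ a⁻¹ :=
  have ⟨_, ⟨T⟩⟩ := h
  T.op.hasFactorSet

theorem map {L : Type*} [Field L] [MulSemiringAction G L] [Algebra F L] (h : HasFactorSet F A a)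
    (f : K →ₐ[F] L) (hf : ∀ (σ : G) k, f (σ • k) = σ • f k) :
    HasFactorSet F A fun σ τ ↦ Units.map (f : K →* L) (a σ τ) :=
  have ⟨_, ⟨T⟩⟩ := h
  (T.map f hf).hasFactorSet

theorem tpow {F A : Type u} [Field F] [Ring A] [Algebra F A] [Algebra F K] [SMulCommClass G F K]
    (h : HasFactorSet F A a) (k : ℕ) : HasFactorSet F (tpow F A k) (a ^ k) := by
  induction k with
  | zero =>
    obtain ⟨e⟩ := nonempty_tpow_zero_algEquiv (F := F) (A := A)
    rw [pow_zero]
    exact TwistedRep.self.hasFactorSet.congr e.symm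
  | succ k ih =>
    obtain ⟨e⟩ := nonempty_tpow_succ_algEquiv (F := F) (A := A) k
    rw [pow_succ]
    exact (ih.tensorProduct h).congr e.symm

section Coboundary

theorem one_of_isCoboundary (h : HasFactorSet F A a) (ha : IsCoboundary a) :
    HasFactorSet F A (1 : G → G → Kˣ) := by
  obtain ⟨n, ⟨T⟩⟩ := h
  obtain ⟨e, he⟩ := ha
  refine ⟨n, ⟨{ T with
    twist σ := (e σ)⁻¹ • T.twist σ
    twist_mul_smul_rep σ x := ?_
    twist_mul_smul_twist σ τ := ?_ }⟩⟩
  · simp [Units.smul_def, T.twist_mul_smul_rep]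
  · have smul_inv : σ • ((e τ)⁻¹ : Kˣ).1 = (σ • (e τ : K))⁻¹ := by simp
    have ne_zero : σ • (e τ : K) ≠ 0 := (smul_ne_zero_iff_ne σ).2 (e τ).ne_zero
    rw [Units.val_smul, Units.val_smul, Units.val_smul, Units.smul_def, Units.smul_def,
      Units.smul_def, smul_distrib_smul, smul_mul_smul_comm, T.twist_mul_smul_twist, smul_smul,
      smul_smul, smul_inv]
    congr 1
    simp [field, he]

variable {N : Type*} [Field N] [Algebra F N] [Algebra N K] [IsScalarTower F N K]

theorem splitsOver_of_one [Finite G] [IsGaloisGroup G N K]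
    (h : HasFactorSet F A (1 : G → G → Kˣ)) : SplitsOver F A N := by
  obtain ⟨n, ⟨T⟩⟩ := h
  have := IsGaloisGroup.faithful (G := G) N (B := K)
  have twist_one : T.twist 1 = 1 :=
    mul_eq_left.1 <| Units.ext <| by simpa using T.twist_mul_smul_twist 1 1
  obtain ⟨P, hP⟩ := exists_units_mul_smul_eq (fun σ ↦ (T.twist σ : Matrix (Fin n) (Fin n) K))
    (by simp [twist_one]) fun σ τ ↦ by simpa using (T.twist_mul_smul_twist σ τ).symm
  let ρ : A →ₐ[F] Matrix (Fin n) (Fin n) K :=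
    (MulSemiringAction.toAlgHom F _ (ConjAct.toConjAct P⁻¹)).comp T.rep
  have P_mul (x) : P * ρ x = T.rep x * P := by
    simp [ρ, ConjAct.units_smul_def, mul_assoc]
  obtain ⟨π⟩ := nonempty_algHom_of_smul_eq (N := N) (G := G) ρ fun σ x ↦ P.mul_right_inj.1 <|
    calc P * σ • ρ x = T.twist σ * σ • (P * ρ x) := by rw [smul_mul', ← mul_assoc, hP]
      _ = T.rep x * (T.twist σ * σ • (P : Matrix (Fin n) (Fin n) K)) := by
        rw [P_mul, smul_mul', ← mul_assoc, T.twist_mul_smul_rep, mul_assoc]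
      _ = P * ρ x := by rw [hP, P_mul]
  exact ⟨n, by simpa using T.card_sq, ⟨π⟩⟩

theorem splitsOver_of_isCoboundary [Finite G] [IsGaloisGroup G N K] (h : HasFactorSet F A a)
    (ha : IsCoboundary a) : SplitsOver F A N :=
  (h.one_of_isCoboundary ha).splitsOver_of_one

variable [Algebra.IsCentral F A] [IsSimpleRing A] [FiniteDimensional F A] [SMulCommClass G F K]

theorem isCoboundary_div (ha : HasFactorSet F A a) (hb : HasFactorSet F A b) :
    IsCoboundary (a / b) := by
  obtain ⟨n, ⟨S⟩⟩ := ha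
  obtain ⟨m, ⟨T⟩⟩ := hb
  obtain rfl : n = m := Nat.pow_left_injective two_ne_zero <| by
    simpa using S.card_sq.trans T.card_sq.symm
  exact S.isCoboundary_div T

theorem isCoboundary_of_splitsOver [SMulCommClass G N K] (h : HasFactorSet F A a)
    (hN : SplitsOver F A N) : IsCoboundary a := by
  obtain ⟨n, hn, ⟨ρ⟩⟩ := hN
  let T : TwistedRep F A (Fin n) (1 : G → G → Kˣ) :=
    { rep := (IsScalarTower.toAlgHom F N K).mapMatrix.comp ρ
      card_sq := by simpa using hn
      twist _ := 1
      twist_mul_smul_rep σ x := by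
        ext i j
        simp
      twist_mul_smul_twist σ τ := by simp }
  simpa using h.isCoboundary_div T.hasFactorSet

end Coboundary

end HasFactorSet

theorem SplitsOver.exists_hasFactorSet [Algebra.IsCentral F A] [IsSimpleRing A]
    [FiniteDimensional F A] [SMulCommClass G F K] (h : SplitsOver F A K) :
    ∃ a : G → G → Kˣ, HasFactorSet F A a := by
  obtain ⟨n, hn, ⟨ρ⟩⟩ := h
  have card_sq : Fintype.card (Fin n) ^ 2 = Module.finrank F A := by simpa using hn
  choose P hP using fun σ : G ↦ exists_units_mul_eq_mul_of_card_sq_eq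
    ((MulSemiringAction.toAlgHom F _ σ).comp ρ) ρ card_sq
  replace hP (σ : G) (x : A) : P σ * σ • ρ x = ρ x * P σ := (hP σ x).symm
  let P' (σ τ : G) : (Matrix (Fin n) (Fin n) K)ˣ :=
    P σ * Units.map (MulSemiringAction.toRingHom G _ σ).toMonoidHom (P τ)
  have P'_mul (σ τ : G) (x : A) : P' σ τ * (σ * τ) • ρ x = ρ x * P' σ τ := by
    change P σ * σ • (P τ : Matrix (Fin n) (Fin n) K) * (σ * τ) • ρ x =
      ρ x * (P σ * σ • (P τ : Matrix (Fin n) (Fin n) K))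
    rw [mul_smul, mul_assoc, ← smul_mul', hP, smul_mul', ← mul_assoc, hP, mul_assoc]
  choose a ha using fun σ τ : G ↦ exists_units_smul_eq_of_intertwine
    (ρ := (MulSemiringAction.toAlgHom F _ (σ * τ)).comp ρ) (ρ' := ρ) card_sq
    (P'_mul σ τ) (hP (σ * τ))
  exact ⟨a, n, ⟨⟨ρ, card_sq, P, hP, ha⟩⟩⟩

end FactorSet

/-! ### Galois splitting fields -/

section GaloisSplitting

theorem isCentral_of_isCentral_matrix {F D : Type u} [Field F] [Ring D] [Algebra F D] {n : ℕ}
    [NeZero n] [Algebra.IsCentral F (Matrix (Fin n) (Fin n) D)] : Algebra.IsCentral F D :=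
  have : Algebra.IsCentral F (D ⊗[F] Matrix (Fin n) (Fin n) F) :=
    .of_algEquiv F _ _ (matrixEquivTensor (Fin n) F D)
  .left_of_tensor_of_field F D (Matrix (Fin n) (Fin n) F)

theorem bot_eq_top_of_isSepClosed {F D : Type*} [Field F] [IsSepClosed F] [DivisionRing D]
    [Algebra F D] [FiniteDimensional F D] [Algebra.IsCentral F D] : (⊥ : Subalgebra F D) = ⊤ := by
  by_contra hne
  obtain ⟨x, x_notMem, x_separable⟩ := JacobsonNoether.exists_separable_and_not_isCentral' hne
  have degree_eq_one := IsSepClosed.degree_eq_one_of_irreducible F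
    (minpoly.irreducible (Algebra.IsIntegral.isIntegral x)) x_separable
  exact x_notMem <| Algebra.mem_bot.2 <| minpoly.degree_eq_one_iff.1 degree_eq_one

variable {F A : Type u} [Field F] [Ring A] [Algebra F A]

theorem splitsOver_of_isSepClosed [Algebra.IsCentral F A] [IsSimpleRing A] [FiniteDimensional F A]
    (K : Type u) [Field K] [Algebra F K] [IsSepClosed K] : SplitsOver F A K := by
  have := isSimpleRing_tensorProduct (F := F) (A := A) (B := K)
  have := isCentral_tensorProduct (F := F) (A := A) (B := K) (K := K)
  have := IsArtinianRing.of_finite K (K ⊗[F] A)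
  obtain ⟨n, n_ne_zero, D, _, _, _, ⟨e⟩⟩ :=
    IsSimpleRing.exists_algEquiv_matrix_divisionRing_finite K (K ⊗[F] A)
  have : Algebra.IsCentral K (Matrix (Fin n) (Fin n) D) := .of_algEquiv K _ _ e
  have : Algebra.IsCentral K D := isCentral_of_isCentral_matrix (n := n)
  let eD : D ≃ₐ[K] K := Subalgebra.topEquiv.symm.trans <|
    (Subalgebra.equivOfEq _ _ bot_eq_top_of_isSepClosed.symm).trans (Algebra.botEquiv K D)
  exact splitsOver_of_isSplit ⟨n, Nat.pos_of_ne_zero n_ne_zero.out, ⟨e.trans eD.mapMatrix⟩⟩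

theorem SplitsOver.exists_finiteGaloisIntermediateField {F A K : Type*} [Field F] [Ring A]
    [Algebra F A] [FiniteDimensional F A] [Field K] [Algebra F K] [IsGalois F K]
    (h : SplitsOver F A K) : ∃ L : FiniteGaloisIntermediateField F K, SplitsOver F A L := by
  obtain ⟨n, hn, ⟨ρ⟩⟩ := h
  let b := Module.finBasis F A
  let entries : Set K := Set.range fun p : _ × Fin n × Fin n ↦ ρ (b p.1) p.2.1 p.2.2
  let L := FiniteGaloisIntermediateField.adjoin F entries
  have mem_L (x i j) : ρ x i j ∈ L.toIntermediateField := by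
    rw [← b.sum_repr x, map_sum, Matrix.sum_apply]
    refine sum_mem fun t _ ↦ ?_
    rw [map_smul]
    exact L.toIntermediateField.smul_mem <|
      FiniteGaloisIntermediateField.subset_adjoin F _ ⟨(t, i, j), rfl⟩
  obtain ⟨π⟩ := nonempty_algHom_of_mem_range (N := L) ρ fun x i j ↦ ⟨⟨_, mem_L x i j⟩, rfl⟩
  exact ⟨L, n, hn, ⟨π⟩⟩

end GaloisSplitting

/-! ### Semilinear substitutions -/

section GCD

variable {R G : Type*} [CommRing R] [IsDomain R]

theorem associated_finset_gcd [NormalizedGCDMonoid R] [Fintype G] (e : G ≃ G) {f g : G → R}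
    (h : ∀ τ, Associated (f τ) (g (e τ))) :
    Associated (Finset.univ.gcd f) (Finset.univ.gcd g) := by
  refine associated_of_dvd_dvd ?_ ?_
  · refine Finset.dvd_gcd fun τ _ ↦ (Finset.gcd_dvd (Finset.mem_univ (e.symm τ))).trans ?_
    simpa using (h (e.symm τ)).dvd
  · exact Finset.dvd_gcd fun τ _ ↦ (Finset.gcd_dvd (Finset.mem_univ (e τ))).trans (h τ).symm.dvd

theorem associated_map_finset_gcd [NormalizedGCDMonoid R] [Fintype G] (T : R ≃+* R) (p : G → R) :
    Associated (T (Finset.univ.gcd p)) (Finset.univ.gcd fun τ ↦ T (p τ)) := by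
  refine associated_of_dvd_dvd ?_ ?_
  · exact Finset.dvd_gcd fun τ hτ ↦ map_dvd T (Finset.gcd_dvd hτ)
  · rw [← T.apply_symm_apply (Finset.univ.gcd _)]
    refine map_dvd T <| Finset.dvd_gcd fun τ hτ ↦ ?_
    simpa using map_dvd T.symm (Finset.gcd_dvd (f := fun τ ↦ T (p τ)) hτ)

/-- If `σ ↦ p σ / p 1` is a cocycle up to units, then it is a coboundary up to units: it is given by
the quotient of `p 1` by the greatest common divisor of all `p σ`. -/
theorem exists_associated_mul_map [GCDMonoid R] [Group G] [Finite G] (T : G → R ≃+* R) {p : G → R}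
    (hp : p 1 ≠ 0) (h : ∀ σ τ, Associated (p (σ * τ) * T σ (p 1)) (p σ * T σ (p τ))) :
    ∃ q ≠ 0, ∀ σ, Associated (p σ * q) (p 1 * T σ q) := by
  cases nonempty_fintype G
  have : NormalizedGCDMonoid R := Classical.choice inferInstance
  let g := Finset.univ.gcd p
  obtain ⟨q, hq⟩ : g ∣ p 1 := Finset.gcd_dvd (Finset.mem_univ 1)
  have g_ne_zero : g ≠ 0 := left_ne_zero_of_mul (hq ▸ hp)
  refine ⟨q, right_ne_zero_of_mul (hq ▸ hp), fun σ ↦ ?_⟩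
  have associated_gcd : Associated (p σ * T σ g) (g * T σ (p 1)) :=
    calc
      Associated (p σ * T σ g) (p σ * Finset.univ.gcd fun τ ↦ T σ (p τ)) :=
        (associated_map_finset_gcd _ p).mul_left _
      Associated _ (Finset.univ.gcd fun τ ↦ p σ * T σ (p τ)) :=
        (Finset.gcd_mul_left' _ _ _).symm
      Associated _ (Finset.univ.gcd fun τ ↦ p τ * T σ (p 1)) :=
        associated_finset_gcd (Equiv.mulLeft σ) fun τ ↦ (h σ τ).symm
      Associated _ (g * T σ (p 1)) := Finset.gcd_mul_right' _ _ _
  have : Associated (p σ) (g * T σ q) := by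
    rw [hq, map_mul, mul_left_comm, mul_comm (p σ)] at associated_gcd
    exact associated_gcd.of_mul_left (.refl _) ((map_ne_zero_iff _ (T σ).injective).2 g_ne_zero)
  calc
    Associated (p σ * q) (g * T σ q * q) := this.mul_right q
    _ = p 1 * T σ q := by rw [hq]; ring

end GCD

section SemilinearSubst

open MvPolynomial

variable {G K ι : Type*} [Group G] [Field K] [MulSemiringAction G K] [Fintype ι]

/-- The `σ`-semilinear substitution of polynomials whose action on linear forms is given by the
matrix `M`. -/
noncomputable def semilinearSubst (σ : G) (M : Matrix ι ι K) :
    MvPolynomial ι K →+* MvPolynomial ι K :=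
  eval₂Hom (C.comp (MulSemiringAction.toRingHom G K σ)) fun j ↦ ∑ i, C (M i j) * X i

@[simp]
theorem semilinearSubst_C (σ : G) (M : Matrix ι ι K) (k : K) :
    semilinearSubst σ M (C k) = C (σ • k) := by
  simp [semilinearSubst]

@[simp]
theorem semilinearSubst_X (σ : G) (M : Matrix ι ι K) (j : ι) :
    semilinearSubst σ M (X j) = ∑ i, C (M i j) * X i := by
  simp [semilinearSubst]

theorem semilinearSubst_semilinearSubst (σ τ : G) (M N : Matrix ι ι K) (p : MvPolynomial ι K) :
    semilinearSubst σ M (semilinearSubst τ N p) = semilinearSubst (σ * τ) (M * σ • N) p := by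
  suffices (semilinearSubst σ M).comp (semilinearSubst τ N) = semilinearSubst (σ * τ) (M * σ • N)
    from DFunLike.congr_fun this p
  refine MvPolynomial.ringHom_ext (fun k ↦ by simp [mul_smul]) fun j ↦ ?_
  simp only [RingHom.comp_apply, semilinearSubst_X, map_sum, map_mul, semilinearSubst_C,
    Matrix.mul_apply, Matrix.smul_apply, Finset.mul_sum, Finset.sum_mul]
  rw [Finset.sum_comm]
  exact Finset.sum_congr rfl fun k _ ↦ Finset.sum_congr rfl fun i _ ↦ by ring

theorem isHomogeneous_semilinearSubst (σ : G) (M : Matrix ι ι K) {p : MvPolynomial ι K} {d : ℕ}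
    (hp : p.IsHomogeneous d) : (semilinearSubst σ M p).IsHomogeneous d := by
  have := hp.eval₂ (C.comp (MulSemiringAction.toRingHom G K σ)) (fun j ↦ ∑ i, C (M i j) * X i)
    (fun k ↦ isHomogeneous_C _ _)
    fun j ↦ IsHomogeneous.sum _ _ _ fun i _ ↦ isHomogeneous_C_mul_X _ _
  rwa [one_mul] at this

theorem semilinearSubst_smul (σ : G) (c : K) (M : Matrix ι ι K) {p : MvPolynomial ι K} {d : ℕ}
    (hp : p.IsHomogeneous d) : semilinearSubst σ (c • M) p = C (c ^ d) * semilinearSubst σ M p := by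
  have sum_smul (j : ι) : ∑ i, C ((c • M) i j) * X i = C c * ∑ i, C (M i j) * X i := by
    simp [Finset.mul_sum, mul_assoc]
  simp only [semilinearSubst, coe_eval₂Hom, eval₂_eq, Finset.mul_sum]
  refine Finset.sum_congr rfl fun m hm ↦ ?_
  have degree_eq : ∑ i ∈ m.support, m i = d := by
    simpa [Finsupp.weight_apply, Finsupp.sum] using hp (mem_support_iff.1 hm)
  simp only [sum_smul, mul_pow, Finset.prod_mul_distrib]
  rw [Finset.prod_pow_eq_pow_sum, degree_eq, C_pow]
  ring

variable [DecidableEq ι]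

@[simp]
theorem semilinearSubst_one_one (p : MvPolynomial ι K) : semilinearSubst (1 : G) 1 p = p := by
  suffices semilinearSubst (1 : G) (1 : Matrix ι ι K) = RingHom.id _
    from DFunLike.congr_fun this p
  exact MvPolynomial.ringHom_ext (by simp) (by simp [Matrix.one_apply])

/-- The semilinear substitution along an invertible matrix, as an automorphism. -/
noncomputable def semilinearSubstEquiv (σ : G) (M : (Matrix ι ι K)ˣ) :
    MvPolynomial ι K ≃+* MvPolynomial ι K :=
  .ofRingHom (semilinearSubst σ M) (semilinearSubst σ⁻¹ (σ⁻¹ • (M⁻¹ : (Matrix ι ι K)ˣ).1))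
    (RingHom.ext fun p ↦ by simp [semilinearSubst_semilinearSubst])
    (RingHom.ext fun p ↦ by simp [semilinearSubst_semilinearSubst, ← smul_mul'])

@[simp]
theorem semilinearSubstEquiv_apply (σ : G) (M : (Matrix ι ι K)ˣ) (p : MvPolynomial ι K) :
    semilinearSubstEquiv σ M p = semilinearSubst σ M p :=
  rfl

end SemilinearSubst

/-! ### The function field of the Severi–Brauer variety -/

section DegreeZeroFractions

open MvPolynomial

variable (K ι : Type*) [Field K]

/-- The field of homogeneous rational functions of degree zero, that is, the function field of
projective space with homogeneous coordinates indexed by `ι`. -/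
noncomputable def degreeZeroFractions :
    IntermediateField K (FractionRing (MvPolynomial ι K)) where
  carrier := {z | ∃ d, ∃ x y : MvPolynomial ι K, x.IsHomogeneous d ∧ y.IsHomogeneous d ∧ y ≠ 0 ∧
    z = algebraMap _ _ x / algebraMap _ _ y}
  mul_mem' := by
    rintro _ _ ⟨d, x, y, hx, hy, y_ne_zero, rfl⟩ ⟨d', x', y', hx', hy', y'_ne_zero, rfl⟩
    refine ⟨d + d', x * x', y * y', hx.mul hx', hy.mul hy', mul_ne_zero y_ne_zero y'_ne_zero, ?_⟩
    simp [div_mul_div_comm]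
  add_mem' := by
    rintro _ _ ⟨d, x, y, hx, hy, y_ne_zero, rfl⟩ ⟨d', x', y', hx', hy', y'_ne_zero, rfl⟩
    refine ⟨d + d', x * y' + y * x', y * y', (hx.mul hy').add (hy.mul hx'), hy.mul hy',
      mul_ne_zero y_ne_zero y'_ne_zero, ?_⟩
    rw [div_add_div _ _ (by simpa) (by simpa)]
    simp
  algebraMap_mem' k := ⟨0, C k, 1, isHomogeneous_C _ _, isHomogeneous_one _ _, one_ne_zero, by
    simp [IsScalarTower.algebraMap_apply K (MvPolynomial ι K) (FractionRing (MvPolynomial ι K)),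
      MvPolynomial.algebraMap_eq]⟩
  inv_mem' := by
    rintro _ ⟨d, x, y, hx, hy, y_ne_zero, rfl⟩
    by_cases x_eq_zero : x = 0
    · exact ⟨d, x, y, hx, hy, y_ne_zero, by simp [x_eq_zero]⟩
    · exact ⟨d, y, x, hy, hx, x_eq_zero, inv_div _ _⟩

variable {K ι}

theorem homogeneousComponent_mul_of_isHomogeneous {x : MvPolynomial ι K} {n : ℕ}
    (hx : x.IsHomogeneous n) (d : ℕ) (q : MvPolynomial ι K) :
    homogeneousComponent (n + d) (x * q) = x * homogeneousComponent d q := by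
  let _ : GradedAlgebra (homogeneousSubmodule ι K) := gradedAlgebra
  simp only [← decomposition.decompose'_apply]
  exact DirectSum.coe_decompose_mul_add_of_left_mem (homogeneousSubmodule ι K) hx

theorem mul_algebraMap_homogeneousComponent {z : FractionRing (MvPolynomial ι K)}
    (hz : z ∈ degreeZeroFractions K ι) {q r : MvPolynomial ι K}
    (h : z * algebraMap _ _ q = algebraMap _ _ r) (d : ℕ) :
    z * algebraMap _ _ (homogeneousComponent d q) = algebraMap _ _ (homogeneousComponent d r) := by
  obtain ⟨n, x, y, hx, hy, y_ne_zero, rfl⟩ := hz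
  have map_y_ne_zero : algebraMap _ (FractionRing (MvPolynomial ι K)) y ≠ 0 := by simpa
  rw [div_mul_eq_mul_div, div_eq_iff map_y_ne_zero, mul_comm _ (algebraMap _ _ y), ← map_mul,
    ← map_mul, (IsFractionRing.injective _ (FractionRing (MvPolynomial ι K))).eq_iff] at h ⊢
  rw [← homogeneousComponent_mul_of_isHomogeneous hx, h,
    homogeneousComponent_mul_of_isHomogeneous hy]

theorem exists_homogeneousComponent_ne_zero {q : MvPolynomial ι K} (hq : q ≠ 0) :
    ∃ d, homogeneousComponent d q ≠ 0 := by
  contrapose! hq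
  rw [← sum_homogeneousComponent q, Finset.sum_eq_zero fun d _ ↦ hq d]

theorem homogeneousComponent_semilinearSubst {G : Type*} [Group G] [MulSemiringAction G K]
    [Fintype ι] (σ : G) (M : Matrix ι ι K) (d : ℕ) (p : MvPolynomial ι K) :
    homogeneousComponent d (semilinearSubst σ M p) =
      semilinearSubst σ M (homogeneousComponent d p) := by
  have component (i : ℕ) : homogeneousComponent d (semilinearSubst σ M (homogeneousComponent i p)) =
      if d = i then semilinearSubst σ M (homogeneousComponent i p) else 0 := by
    rw [homogeneousComponent_of_mem
      (isHomogeneous_semilinearSubst σ M (homogeneousComponent_isHomogeneous i p))]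
  conv_lhs => rw [← sum_homogeneousComponent p]
  simp only [map_sum, component, Finset.sum_ite_eq, Finset.mem_range]
  split_ifs with hd
  · rfl
  · rw [homogeneousComponent_eq_zero d p (by lia), map_zero]

end DegreeZeroFractions

section FunctionField

open MvPolynomial

variable {F A ι G K : Type*} [Field F] [Ring A] [Algebra F A] [Fintype ι] [DecidableEq ι]
  [Group G] [Field K] [MulSemiringAction G K] [Algebra F K] {a : G → G → Kˣ}

namespace TwistedRep

/-- The homogeneous rational functions of degree zero in the coordinates of a twisted
representation, as a field with the semilinear `G`-action given by the twisting matrices. For a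
Galois group `G`, it is the function field of the Severi–Brauer variety after scalar extension to
`K`. -/
def FunctionField (_T : TwistedRep F A ι a) : Type _ :=
  degreeZeroFractions K ι

variable (T : TwistedRep F A ι a)

noncomputable instance : Field T.FunctionField :=
  inferInstanceAs (Field (degreeZeroFractions K ι))

noncomputable instance : Algebra K T.FunctionField :=
  inferInstanceAs (Algebra K (degreeZeroFractions K ι))

noncomputable instance : Algebra F T.FunctionField :=
  inferInstanceAs (Algebra F (degreeZeroFractions K ι))

instance : IsScalarTower F K T.FunctionField :=
  inferInstanceAs (IsScalarTower F K (degreeZeroFractions K ι))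

/-- The semilinear substitution given by a twisting matrix, on all rational functions. -/
noncomputable def fractionEquiv (σ : G) :
    FractionRing (MvPolynomial ι K) ≃+* FractionRing (MvPolynomial ι K) :=
  IsFractionRing.ringEquivOfRingEquiv (semilinearSubstEquiv σ (T.twist σ))

@[simp]
theorem fractionEquiv_algebraMap (σ : G) (p : MvPolynomial ι K) :
    T.fractionEquiv σ (algebraMap _ _ p) = algebraMap _ _ (semilinearSubst σ (T.twist σ).1 p) :=
  IsFractionRing.ringEquivOfRingEquiv_algebraMap _ _

theorem semilinearSubst_twist (σ τ : G) {p : MvPolynomial ι K} {d : ℕ} (hp : p.IsHomogeneous d) :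
    semilinearSubst σ (T.twist σ).1 (semilinearSubst τ (T.twist τ).1 p) =
      C ((a σ τ : K) ^ d) * semilinearSubst (σ * τ) (T.twist (σ * τ)).1 p := by
  rw [semilinearSubst_semilinearSubst, T.twist_mul_smul_twist, semilinearSubst_smul _ _ _ hp]

theorem semilinearSubst_twist_ne_zero (σ : G) {p : MvPolynomial ι K} (hp : p ≠ 0) :
    semilinearSubst σ (T.twist σ).1 p ≠ 0 :=
  (map_ne_zero_iff _ (semilinearSubstEquiv σ (T.twist σ)).injective).2 hp

theorem fractionEquiv_mem (σ : G) {z : FractionRing (MvPolynomial ι K)}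
    (hz : z ∈ degreeZeroFractions K ι) : T.fractionEquiv σ z ∈ degreeZeroFractions K ι := by
  obtain ⟨d, x, y, hx, hy, y_ne_zero, rfl⟩ := hz
  exact ⟨d, _, _, isHomogeneous_semilinearSubst σ (T.twist σ).1 hx,
    isHomogeneous_semilinearSubst σ (T.twist σ).1 hy, T.semilinearSubst_twist_ne_zero σ y_ne_zero,
    by simp⟩

theorem fractionEquiv_mul (σ τ : G) {z : FractionRing (MvPolynomial ι K)}
    (hz : z ∈ degreeZeroFractions K ι) :
    T.fractionEquiv (σ * τ) z = T.fractionEquiv σ (T.fractionEquiv τ z) := by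
  obtain ⟨d, x, y, hx, hy, -, rfl⟩ := hz
  simp only [map_div₀, fractionEquiv_algebraMap, T.semilinearSubst_twist σ τ hx,
    T.semilinearSubst_twist σ τ hy, map_mul]
  rw [mul_div_mul_left _ _ (by simp)]

noncomputable instance : MulSemiringAction G T.FunctionField where
  smul σ z := ⟨T.fractionEquiv σ z.1, T.fractionEquiv_mem σ z.2⟩
  one_smul z := Subtype.ext <| (T.fractionEquiv 1).injective <| by
    change T.fractionEquiv 1 (T.fractionEquiv 1 z.1) = T.fractionEquiv 1 z.1
    rw [← T.fractionEquiv_mul 1 1 z.2, mul_one]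
  mul_smul σ τ z := Subtype.ext <| T.fractionEquiv_mul σ τ z.2
  smul_zero σ := Subtype.ext <| map_zero (T.fractionEquiv σ)
  smul_add σ y z := Subtype.ext <| map_add (T.fractionEquiv σ) y.1 z.1
  smul_one σ := Subtype.ext <| map_one (T.fractionEquiv σ)
  smul_mul σ y z := Subtype.ext <| map_mul (T.fractionEquiv σ) y.1 z.1

/-- The inclusion of the function field into all rational functions. -/
noncomputable def toFractionRing : T.FunctionField →+* FractionRing (MvPolynomial ι K) :=
  (degreeZeroFractions K ι).val.toRingHom

theorem toFractionRing_injective : Function.Injective T.toFractionRing :=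
  Subtype.val_injective

theorem toFractionRing_mem (z : T.FunctionField) : T.toFractionRing z ∈ degreeZeroFractions K ι :=
  z.2

theorem exists_toFractionRing_eq {z : FractionRing (MvPolynomial ι K)}
    (hz : z ∈ degreeZeroFractions K ι) : ∃ y, T.toFractionRing y = z :=
  ⟨⟨z, hz⟩, rfl⟩

@[simp]
theorem toFractionRing_smul (σ : G) (z : T.FunctionField) :
    T.toFractionRing (σ • z) = T.fractionEquiv σ (T.toFractionRing z) :=
  rfl

@[simp]
theorem toFractionRing_algebraMap (k : K) :
    T.toFractionRing (algebraMap K _ k) = algebraMap (MvPolynomial ι K) _ (C k) :=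
  ((degreeZeroFractions K ι).val.commutes k).trans <|
    IsScalarTower.algebraMap_apply K (MvPolynomial ι K) _ k

theorem smul_algebraMap (σ : G) (k : K) :
    σ • algebraMap K T.FunctionField k = algebraMap K T.FunctionField (σ • k) :=
  T.toFractionRing_injective <| by simp

instance [FaithfulSMul G K] : FaithfulSMul G T.FunctionField where
  eq_of_smul_eq_smul {σ τ} h := FaithfulSMul.eq_of_smul_eq_smul fun k : K ↦
    (algebraMap K T.FunctionField).injective <| by simp only [← smul_algebraMap, h]

instance [SMulCommClass G F K] : SMulCommClass G F T.FunctionField where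
  smul_comm σ r z := by
    simp only [Algebra.smul_def, smul_mul', IsScalarTower.algebraMap_apply F K T.FunctionField,
      smul_algebraMap, _root_.smul_algebraMap]

theorem exists_units_mul_eq_semilinearSubst {q : MvPolynomial ι K} {d : ℕ} (hq : q.IsHomogeneous d)
    (q_ne_zero : q ≠ 0) :
    ∃ z : G → T.FunctionFieldˣ,
      (∀ σ, T.toFractionRing (z σ) * algebraMap _ _ q =
        algebraMap _ _ (semilinearSubst σ (T.twist σ).1 q)) ∧
      ∀ σ τ, algebraMap K _ (a σ τ ^ d) * (z (σ * τ) : T.FunctionField) = z σ * σ • (z τ).1 := by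
  let t := algebraMap (MvPolynomial ι K) (FractionRing (MvPolynomial ι K))
  let Q σ := semilinearSubst σ (T.twist σ).1 q
  have hQ σ : (Q σ).IsHomogeneous d := isHomogeneous_semilinearSubst σ (T.twist σ).1 hq
  have t_q_ne_zero : t q ≠ 0 := by simpa [t]
  have t_Q_ne_zero σ : t (Q σ) ≠ 0 := by
    simpa [t] using T.semilinearSubst_twist_ne_zero σ q_ne_zero
  choose z hz using fun σ ↦ T.exists_toFractionRing_eq ⟨d, _, _, hQ σ, hq, q_ne_zero, rfl⟩
  have z_ne_zero σ : z σ ≠ 0 := fun h ↦ div_ne_zero (t_Q_ne_zero σ) t_q_ne_zero <| by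
    rw [← hz, h, map_zero]
  refine ⟨fun σ ↦ .mk0 (z σ) (z_ne_zero σ), fun σ ↦ ?_, fun σ τ ↦ T.toFractionRing_injective ?_⟩
  · rw [Units.val_mk0, hz, div_mul_cancel₀ _ t_q_ne_zero]
  · calc
      _ = t (C (a σ τ ^ d)) * (t (Q (σ * τ)) / t q) := by simp [hz, t, Q]
      _ = t (semilinearSubst σ (T.twist σ).1 (Q τ)) / t q := by
        rw [T.semilinearSubst_twist σ τ hq, map_mul, mul_div_assoc]
      _ = t (Q σ) / t q * (t (semilinearSubst σ (T.twist σ).1 (Q τ)) / t (Q σ)) := by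
        rw [mul_comm, div_mul_div_cancel₀ (t_Q_ne_zero σ)]
      _ = _ := by simp [hz, t, Q]

theorem isCoboundary_map_algebraMap [Nonempty ι] :
    IsCoboundary fun σ τ ↦ Units.map (algebraMap K T.FunctionField).toMonoidHom (a σ τ) := by
  obtain ⟨z, -, hz⟩ := T.exists_units_mul_eq_semilinearSubst
    (isHomogeneous_X K (Classical.arbitrary ι)) (X_ne_zero _)
  exact ⟨z, by simpa using hz⟩

end TwistedRep

end FunctionField

section Coboundary

open MvPolynomial

theorem associated_C_mul {ι K : Type*} [Field K] {k : K} (hk : k ≠ 0) (p : MvPolynomial ι K) :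
    Associated (C k * p) p :=
  (associated_isUnit_mul_left_iff (hk.isUnit.map C)).2 (.refl p)

namespace TwistedRep

variable {F A ι G K : Type*} [Field F] [Ring A] [Algebra F A] [Fintype ι] [DecidableEq ι]
  [Group G] [Finite G] [Field K] [MulSemiringAction G K] [Algebra F K] {a b : G → G → Kˣ}
  (T : TwistedRep F A ι a) {f : G → T.FunctionFieldˣ}

theorem exists_associated_semilinearSubst
    (hf : ∀ σ τ, algebraMap K _ (b σ τ) * (f (σ * τ) : T.FunctionField) = f σ * σ • (f τ).1)
    {p : G → MvPolynomial ι K} {s : MvPolynomial ι K} (s_ne_zero : s ≠ 0)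
    (hp : ∀ σ, algebraMap _ _ (p σ) = T.toFractionRing (f σ) * algebraMap _ _ s) :
    ∃ q ≠ 0, ∀ σ, Associated (p σ * q) (s * semilinearSubst σ (T.twist σ).1 q) := by
  have algebraMap_injective :=
    IsFractionRing.injective (MvPolynomial ι K) (FractionRing (MvPolynomial ι K))
  have f_one : (f 1 : T.FunctionField) = algebraMap K _ (b 1 1) :=
    (mul_right_cancel₀ (f 1).ne_zero (by simpa using hf 1 1)).symm
  have p_one : p 1 = C (b 1 1 : K) * s := algebraMap_injective <| by
    rw [hp, f_one, toFractionRing_algebraMap, map_mul]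
  have cocycle (σ τ) : C (b σ τ : K) * (p (σ * τ) * semilinearSubst σ (T.twist σ).1 s) =
      p σ * semilinearSubst σ (T.twist σ).1 (p τ) := algebraMap_injective <| by
    have := congrArg T.toFractionRing (hf σ τ)
    simp only [map_mul, toFractionRing_algebraMap, toFractionRing_smul] at this
    simp only [map_mul, ← fractionEquiv_algebraMap, hp]
    linear_combination algebraMap _ _ s * T.fractionEquiv σ (algebraMap _ _ s) * this
  let _ : GCDMonoid (MvPolynomial ι K) := UniqueFactorizationMonoid.toGCDMonoid _
  obtain ⟨q, q_ne_zero, hq⟩ := exists_associated_mul_map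
    (fun σ ↦ semilinearSubstEquiv σ (T.twist σ)) (p := p) (by simp [p_one, s_ne_zero]) fun σ τ ↦ by
      simp only [semilinearSubstEquiv_apply, ← cocycle, p_one, map_mul, semilinearSubst_C]
      rw [mul_left_comm]
      exact (associated_C_mul ((smul_ne_zero_iff_ne σ).2 (b 1 1).ne_zero) _).trans
        (associated_C_mul (b σ τ).ne_zero _).symm
  refine ⟨q, q_ne_zero, fun σ ↦ (hq σ).trans ?_⟩
  rw [p_one, mul_assoc]
  exact associated_C_mul (b 1 1).ne_zero _

theorem exists_mul_eq_semilinearSubst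
    (hf : ∀ σ τ, algebraMap K _ (b σ τ) * (f (σ * τ) : T.FunctionField) = f σ * σ • (f τ).1) :
    ∃ q ≠ 0, ∀ σ, ∃ ε : Kˣ, T.toFractionRing (f σ) * algebraMap _ _ q =
      algebraMap (MvPolynomial ι K) _ (C (ε : K) * semilinearSubst σ (T.twist σ).1 q) := by
  obtain ⟨⟨s, hs⟩, h⟩ := IsLocalization.exist_integer_multiples_of_finite
    (nonZeroDivisors (MvPolynomial ι K)) fun σ ↦ T.toFractionRing (f σ)
  have s_ne_zero : s ≠ 0 := nonZeroDivisors.ne_zero hs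
  choose p hp using h
  replace hp σ : algebraMap _ _ (p σ) = T.toFractionRing (f σ) * algebraMap _ _ s := by
    rw [mul_comm, ← Algebra.smul_def]; exact hp σ
  obtain ⟨q, q_ne_zero, hq⟩ := T.exists_associated_semilinearSubst hf s_ne_zero hp
  refine ⟨q, q_ne_zero, fun σ ↦ ?_⟩
  obtain ⟨u, hu⟩ := (hq σ).symm
  obtain ⟨ε, hε, u_eq⟩ := isUnit_iff_eq_C_of_isReduced.1 u.isUnit
  refine ⟨hε.unit, mul_left_cancel₀ (a := algebraMap _ _ s) (by simpa) ?_⟩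
  rw [← mul_assoc, mul_comm (algebraMap _ _ s), ← hp, ← map_mul, ← hu, u_eq, IsUnit.unit_spec]
  simp only [map_mul]
  ring

theorem exists_isCoboundary_div_pow
    (hb : IsCoboundary fun σ τ ↦ Units.map (algebraMap K T.FunctionField).toMonoidHom (b σ τ)) :
    ∃ k : ℕ, IsCoboundary (b / a ^ k) := by
  obtain ⟨f, hf⟩ := hb
  obtain ⟨q, q_ne_zero, hq⟩ := T.exists_mul_eq_semilinearSubst hf
  choose ε hε using hq
  obtain ⟨d, q_d_ne_zero⟩ := exists_homogeneousComponent_ne_zero q_ne_zero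
  obtain ⟨z, hz, hz'⟩ := T.exists_units_mul_eq_semilinearSubst
    (homogeneousComponent_isHomogeneous d q) q_d_ne_zero
  have f_eq (σ) : (f σ : T.FunctionField) = algebraMap K _ (ε σ) * z σ := by
    refine T.toFractionRing_injective <| mul_right_cancel₀
      (b := algebraMap _ _ (homogeneousComponent d q)) (by simpa) ?_
    rw [mul_algebraMap_homogeneousComponent (T.toFractionRing_mem _) (hε σ),
      homogeneousComponent_C_mul, homogeneousComponent_semilinearSubst]
    simp [mul_assoc, hz]
  refine ⟨d, ε, fun σ τ ↦ ?_⟩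
  have mul_eq : (b σ τ : K) * ε (σ * τ) = a σ τ ^ d * (ε σ * σ • (ε τ : K)) := by
    refine (algebraMap K T.FunctionField).injective <| mul_right_cancel₀ (z (σ * τ)).ne_zero ?_
    have : algebraMap K _ (b σ τ : K) * (f (σ * τ) : T.FunctionField) = f σ * σ • (f τ).1 := hf σ τ
    simp only [f_eq, smul_mul', smul_algebraMap] at this
    simp only [map_mul]
    linear_combination this -
      algebraMap K _ (ε σ : K) * algebraMap K T.FunctionField (σ • (ε τ : K)) * hz' σ τ
  simp [div_mul_eq_mul_div, mul_eq]

end TwistedRep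

end Coboundary

section Invariants

namespace TwistedRep

variable {F A B ι G K : Type*} [Field F] [Ring A] [Algebra F A] [Ring B] [Algebra F B]
  [Fintype ι] [DecidableEq ι] [Group G] [Field K] [MulSemiringAction G K] [Algebra F K]
  {a b : G → G → Kˣ} (T : TwistedRep F A ι a)

theorem hasFactorSet_functionField (hB : HasFactorSet F B b) :
    HasFactorSet F B fun σ τ ↦ Units.map (algebraMap K T.FunctionField).toMonoidHom (b σ τ) :=
  hB.map (IsScalarTower.toAlgHom F K T.FunctionField) fun σ k ↦ (T.smul_algebraMap σ k).symm

variable [SMulCommClass G F K]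

/-- The field of invariants of the function field of a twisted representation. For a Galois group
`G` it is the function field of the Severi–Brauer variety. -/
noncomputable abbrev invariantField : IntermediateField F T.FunctionField :=
  FixedPoints.intermediateField G

variable [Finite G] [FaithfulSMul G K]

instance : IsGaloisGroup G T.invariantField T.FunctionField :=
  inferInstanceAs (IsGaloisGroup G (FixedPoints.subfield G T.FunctionField) T.FunctionField)

theorem splitsOver_invariantField [Nonempty ι] : SplitsOver F A T.invariantField :=
  (T.hasFactorSet_functionField T.hasFactorSet).splitsOver_of_isCoboundary
    T.isCoboundary_map_algebraMap

theorem exists_isCoboundary_div_pow_of_splitsOver [Algebra.IsCentral F B] [IsSimpleRing B]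
    [FiniteDimensional F B] (hB : HasFactorSet F B b) (h : SplitsOver F B T.invariantField) :
    ∃ k : ℕ, IsCoboundary (b / a ^ k) :=
  T.exists_isCoboundary_div_pow ((T.hasFactorSet_functionField hB).isCoboundary_of_splitsOver h)

end TwistedRep

end Invariants

/-! ### Specialization along a place -/

section ValuationRing

open Matrix

variable {F A V E : Type*} [Field F] [Ring A] [Algebra F A] [CommRing V] [Algebra F V]
  [Field E] [Algebra F E] [Algebra V E] [IsScalarTower F V E]
  {ι : Type*} [Fintype ι] [DecidableEq ι]

variable (V) in
theorem exists_isLattice_forall_mulVec_mem [FiniteDimensional F A] (ρ : A →ₐ[F] Matrix ι ι E) :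
    ∃ Λ : Submodule V (ι → E), Λ.IsLattice E ∧ ∀ x, ∀ w ∈ Λ, ρ x *ᵥ w ∈ Λ := by
  let b := Module.finBasis F A
  let e := Pi.basisFun E ι
  let Λ := Submodule.span V (Set.range fun p : _ × ι ↦ ρ (b p.1) *ᵥ e p.2)
  have mulVec_basis_mem (x j) : ρ x *ᵥ e j ∈ Λ := by
    rw [← b.sum_repr x, map_sum, Matrix.sum_mulVec]
    refine Submodule.sum_mem _ fun t _ ↦ ?_
    rw [map_smul, Matrix.smul_mulVec]
    exact Submodule.smul_of_tower_mem _ _ (Submodule.subset_span ⟨(t, j), rfl⟩)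
  refine ⟨Λ, ⟨Submodule.fg_span (Set.finite_range _), ?_⟩, fun x w hw ↦ ?_⟩
  · rw [eq_top_iff, ← e.span_eq, Submodule.span_le]
    rintro _ ⟨j, rfl⟩
    exact Submodule.subset_span (by simpa using mulVec_basis_mem 1 j)
  · induction hw using Submodule.span_induction with
    | mem w hw =>
      obtain ⟨⟨t, j⟩, rfl⟩ := hw
      simpa using mulVec_basis_mem (x * b t) j
    | zero => simp
    | add w w' _ _ hw hw' => simpa [Matrix.mulVec_add] using Λ.add_mem hw hw'
    | smul r w _ hw => simpa [Matrix.mulVec_smul] using Λ.smul_mem r hw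

theorem extendOfIsLattice_repr_apply [IsFractionRing V E] {κ W : Type*} [AddCommGroup W]
    [Module V W] [Module E W] [IsScalarTower V E W] {Λ : Submodule V W} [Λ.IsLattice E]
    (β : Module.Basis κ V Λ) (w : Λ) (k : κ) :
    (β.extendOfIsLattice E).repr w k = algebraMap V E (β.repr w k) := by
  classical
  have : ((β.extendOfIsLattice E).coord k).restrictScalars V ∘ₗ Λ.subtype =
      Algebra.linearMap V E ∘ₗ β.coord k :=
    β.ext fun l ↦ by
      have := (β.extendOfIsLattice E).repr_self l
      rw [Module.Basis.extendOfIsLattice_apply] at this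
      simp [this, Finsupp.single_apply, apply_ite (algebraMap V E)]
  exact LinearMap.congr_fun this w

variable [IsDomain V] [ValuationRing V] [IsFractionRing V E]

theorem free_of_isLattice {W : Type*} [AddCommGroup W] [Module V W] [Module E W]
    [IsScalarTower V E W] (Λ : Submodule V W) [Λ.IsLattice E] : Module.Free V Λ := by
  have : Module.Finite V Λ := Submodule.IsLattice.finite E Λ
  have : Module.IsTorsionFree V W := .trans_faithfulSMul V E W
  have : Module.Flat V Λ := by
    rw [Module.Flat.flat_iff_torsion_eq_bot_of_isBezout,
      ← Submodule.isTorsionFree_iff_torsion_eq_bot]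
    infer_instance
  exact Module.free_of_flat_of_isLocalRing

variable (V) in
theorem nonempty_algHom_matrix_valuationRing [FiniteDimensional F A] (ρ : A →ₐ[F] Matrix ι ι E) :
    Nonempty (A →ₐ[F] Matrix ι ι V) := by
  obtain ⟨Λ, _, mulVec_mem⟩ := exists_isLattice_forall_mulVec_mem V ρ
  have : Module.Finite V Λ := Submodule.IsLattice.finite E Λ
  have : Module.Free V Λ := free_of_isLattice (E := E) Λ
  let β : Module.Basis ι V Λ := (Module.finBasis V Λ).reindex
    (((Module.finBasis V Λ).extendOfIsLattice E).indexEquiv (Pi.basisFun E ι))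
  let B := β.extendOfIsLattice E
  let θ := (LinearMap.toMatrixAlgEquiv B).toAlgHom.comp (Matrix.toLinAlgEquiv' (R := E)).toAlgHom
  refine nonempty_algHom_of_mem_range (N := V) ((θ.restrictScalars F).comp ρ) fun x i j ↦ ?_
  let w : Λ := ⟨ρ x *ᵥ (β j : ι → E), mulVec_mem x _ (β j).2⟩
  exact ⟨β.repr w i, by
    simpa [θ, LinearMap.toMatrixAlgEquiv_apply, w, B] using
      (extendOfIsLattice_repr_apply (E := E) β w i).symm⟩

end ValuationRing

theorem SplitsOver.of_place {F A E N : Type u} [Field F] [Ring A] [Algebra F A]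
    [FiniteDimensional F A] [Field E] [Algebra F E] [Field N] [Algebra F N]
    (h : SplitsOver F A E) (P : FPlace F E N) : SplitsOver F A N := by
  obtain ⟨n, hn, ⟨ρ⟩⟩ := h
  let _ : Algebra F P.V :=
    ((algebraMap F E).codRestrict P.V fun a ↦ (P.compat a).1).toAlgebra
  have : IsScalarTower F P.V E := .of_algebraMap_eq fun _ ↦ rfl
  let f : P.V →ₐ[F] N := { P.f with commutes' a := (P.compat a).2 }
  obtain ⟨π⟩ := nonempty_algHom_matrix_valuationRing P.V ρ
  exact ⟨n, hn, ⟨f.mapMatrix.comp π⟩⟩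

/-! ### Brauer equivalence -/

section MatrixUnits

open Matrix

variable {F B E W : Type*} [Field F] [Ring B] [Algebra F B] [Field E] [Algebra F E]
  [AddCommGroup W] [Module E W] [Module F W] [IsScalarTower F E W]
  {ι : Type*} [Fintype ι] [DecidableEq ι]

theorem finrank_eq_card_mul_finrank_range [Module.Finite E W]
    (f : Matrix ι ι B →ₐ[F] Module.End E W) (o : ι) :
    Module.finrank E W = Fintype.card ι * Module.finrank E (f (single o o 1)).range := by
  let U := (f (single o o 1)).range
  let u (i j) := f (single i j 1)
  have u_mul_u (i j k) : u i j * u j k = u i k := by simp [u, ← map_mul]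
  have u_mul_u_of_ne {i j k l} (h : j ≠ k) : u i j * u k l = 0 := by
    simp [u, ← map_mul, single_mul_single_of_ne _ _ _ _ h]
  have sum_u : ∑ i, u i i = 1 := by simp [u, ← map_sum, sum_single_one]
  let toPi : W →ₗ[E] ι → U := LinearMap.pi fun i ↦
    (u o i).codRestrict U fun w ↦ ⟨u o i w, LinearMap.congr_fun (u_mul_u o o i) w⟩
  let ofPi : (ι → U) →ₗ[E] W := ∑ i, u i o ∘ₗ U.subtype ∘ₗ LinearMap.proj i
  have toPi_ofPi : toPi ∘ₗ ofPi = .id := by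
    have u_apply (v : U) : u o o v = v := by
      obtain ⟨w, hw⟩ := v.2
      rw [← hw]
      exact LinearMap.congr_fun (u_mul_u o o o) w
    refine LinearMap.ext fun v ↦ funext fun i ↦ Subtype.ext ?_
    calc
      u o i (ofPi v) = ∑ j, (u o i * u j o) (v j) := by simp [ofPi]
      _ = (u o i * u i o) (v i) :=
        Finset.sum_eq_single_of_mem i (Finset.mem_univ i) fun j _ hj ↦ by
          rw [u_mul_u_of_ne hj.symm, LinearMap.zero_apply]
      _ = v i := by rw [u_mul_u, u_apply]
  have ofPi_toPi : ofPi ∘ₗ toPi = .id := by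
    refine LinearMap.ext fun w ↦ ?_
    calc
      ofPi (toPi w) = ∑ i, (u i o * u o i) w := by simp [ofPi]; rfl
      _ = w := by simp only [u_mul_u, ← LinearMap.sum_apply, sum_u, Module.End.one_apply]
  simpa [Module.finrank_pi_fintype] using
    (LinearEquiv.ofLinearMap toPi ofPi toPi_ofPi ofPi_toPi).finrank_eq

/-- The representation of `B` on the range of the matrix unit at `o` in a representation of
`Matrix ι ι B`, the algebra `B` acting through the scalar matrices. -/
def restrictRange (f : Matrix ι ι B →ₐ[F] Module.End E W) (o : ι) :
    B →ₐ[F] Module.End E (f (single o o 1)).range :=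
  let g : B →ₐ[F] Module.End E W := f.comp (scalarAlgHom ι F)
  have commute (b) : g b * f (single o o 1) = f (single o o 1) * g b := by
    simp [g, ← map_mul, ← smul_eq_diagonal_mul, ← op_smul_eq_mul_diagonal, smul_single]
  have mem_range (b w) (hw : w ∈ (f (single o o 1)).range) : g b w ∈ (f (single o o 1)).range := by
    obtain ⟨v, rfl⟩ := hw
    exact ⟨g b v, (LinearMap.congr_fun (commute b) v).symm⟩
  { toFun b := (g b).restrict (mem_range b)
    map_one' := by ext; simp
    map_mul' x y := by ext; simp
    map_zero' := by ext; simp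
    map_add' x y := by ext; simp
    commutes' c := by ext; simp }

end MatrixUnits

namespace SplitsOver

section BrauerClass

variable {F A B E : Type*} [Field F] [Ring A] [Algebra F A] [Ring B] [Algebra F B] [Field E]
  [Algebra F E]

theorem congr (h : SplitsOver F A E) (e : A ≃ₐ[F] B) : SplitsOver F B E :=
  have ⟨n, hn, ⟨ρ⟩⟩ := h
  ⟨n, hn.trans e.toLinearEquiv.finrank_eq, ⟨ρ.comp e.symm.toAlgHom⟩⟩

theorem self : SplitsOver F F E :=
  of_matrix (ι := Unit) (Algebra.ofId F _) (by simp)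

theorem tensorProduct (hA : SplitsOver F A E) (hB : SplitsOver F B E) :
    SplitsOver F (A ⊗[F] B) E := by
  obtain ⟨n, hn, ⟨ρ⟩⟩ := hA
  obtain ⟨m, hm, ⟨π⟩⟩ := hB
  exact of_matrix (kroneckerRep ρ π) (by simp [mul_pow, hn, hm])

theorem tpow {F A E : Type u} [Field F] [Ring A] [Algebra F A] [Field E] [Algebra F E]
    (h : SplitsOver F A E) (k : ℕ) : SplitsOver F (tpow F A k) E := by
  induction k with
  | zero =>
    obtain ⟨e⟩ := nonempty_tpow_zero_algEquiv (F := F) (A := A)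
    exact self.congr e.symm
  | succ k ih =>
    obtain ⟨e⟩ := nonempty_tpow_succ_algEquiv (F := F) (A := A) k
    exact (ih.tensorProduct h).congr e.symm

variable {ι : Type*} [Fintype ι] [DecidableEq ι]

theorem matrix (h : SplitsOver F A E) : SplitsOver F (Matrix ι ι A) E := by
  obtain ⟨n, hn, ⟨ρ⟩⟩ := h
  refine of_matrix ((Matrix.compAlgEquiv ι (Fin n) E F).toAlgHom.comp ρ.mapMatrix) ?_
  simp only [Module.finrank_matrix, Fintype.card_prod, Fintype.card_fin, ← hn]
  ring

theorem of_matrix_algebra [Nonempty ι] (h : SplitsOver F (Matrix ι ι B) E) :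
    SplitsOver F B E := by
  obtain ⟨n, hn, ⟨ρ⟩⟩ := h
  let o := Classical.arbitrary ι
  let f := ((Matrix.toLinAlgEquiv' (R := E)).toAlgHom.restrictScalars F).comp ρ
  have card_pos : 0 < Fintype.card ι := Fintype.card_pos
  refine of_end (restrictRange f o) (Nat.eq_of_mul_eq_mul_left (pow_pos card_pos 2) ?_)
  rw [← mul_pow, ← finrank_eq_card_mul_finrank_range f o, Module.finrank_fin_fun, hn,
    Module.finrank_matrix, sq]

theorem of_brauerEquiv {F A B E : Type u} [Field F] [Ring A] [Algebra F A] [Ring B] [Algebra F B]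
    [Field E] [Algebra F E] (hA : SplitsOver F A E) (h : BrauerEquiv F B A) :
    SplitsOver F B E := by
  obtain ⟨n, m, hn, -, ⟨e⟩⟩ := h
  have : NeZero n := ⟨hn.ne'⟩
  exact of_matrix_algebra (hA.matrix.congr e.symm)

end BrauerClass

end SplitsOver

/-! ### Amitsur's theorem -/

theorem exists_finiteGaloisIntermediateField_splitsOver {F B C : Type u} [Field F] [Ring B]
    [Algebra F B] [Ring C] [Algebra F C] (hB : IsCSA F B) (hC : IsCSA F C) :
    ∃ L : FiniteGaloisIntermediateField F (SeparableClosure F),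
      SplitsOver F B L ∧ SplitsOver F C L := by
  have ⟨_, _, _⟩ := hB
  have ⟨_, _, _⟩ := hC
  let K := SeparableClosure F
  have hBK : SplitsOver F B K := splitsOver_of_isSepClosed K
  have hCK : SplitsOver F C K := splitsOver_of_isSepClosed K
  obtain ⟨L₁, hL₁⟩ := hBK.exists_finiteGaloisIntermediateField
  obtain ⟨L₂, hL₂⟩ := hCK.exists_finiteGaloisIntermediateField
  exact ⟨L₁ ⊔ L₂, hL₁.mono (IntermediateField.inclusion le_sup_left),
    hL₂.mono (IntermediateField.inclusion le_sup_right)⟩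

theorem SplitsOver.isSplit {F A : Type u} [Field F] [Ring A] [Algebra F A]
    (h : SplitsOver F A F) (hA : IsCSA F A) : IsSplit F A := by
  obtain ⟨n, hn, ⟨e⟩⟩ := hA.isSplit_iff_splitsOver.2 h
  exact ⟨n, hn, ⟨(Algebra.TensorProduct.lid F A).symm.trans e⟩⟩

theorem brauerEquiv_tpow_of_isCoboundary_div_pow {F B C G K : Type u} [Field F] [Ring B]
    [Algebra F B] [Ring C] [Algebra F C] [Group G] [Finite G] [Field K] [Algebra F K]
    [MulSemiringAction G K] [IsGaloisGroup G F K] {a b : G → G → Kˣ}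
    (hB : IsCSA F B) (hC : IsCSA F C) (b_factorSet : HasFactorSet F B b)
    (a_factorSet : HasFactorSet F C a) {k : ℕ} (h : IsCoboundary (b / a ^ k)) :
    BrauerEquiv F B (tpow F C k) := by
  have : HasFactorSet F (B ⊗[F] (tpow F C k)ᵐᵒᵖ) (b / a ^ k) := by
    simpa [div_eq_mul_inv] using b_factorSet.tensorProduct (a_factorSet.tpow k).op
  have hBC : IsCSA F (B ⊗[F] (tpow F C k)ᵐᵒᵖ) := hB.tensorProduct (hC.tpow k).op
  exact (hC.tpow k).brauerEquiv_of_isSplit ((this.splitsOver_of_isCoboundary h).isSplit hBC)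

theorem exists_brauerEquiv_tpow {F B C : Type u} [Field F] [Ring B] [Algebra F B] [Ring C]
    [Algebra F C] (hB : IsCSA F B) (hC : IsCSA F C)
    (h : ∀ (N : Type u) [Field N] [Algebra F N], SplitsOver F C N → SplitsOver F B N) :
    ∃ k : ℕ, BrauerEquiv F B (tpow F C k) := by
  have ⟨_, _, _⟩ := hB
  have ⟨_, _, _⟩ := hC
  obtain ⟨L, hLB, hLC⟩ := exists_finiteGaloisIntermediateField_splitsOver hB hC
  obtain ⟨b, hb⟩ := hLB.exists_hasFactorSet (G := Gal(L/F))
  obtain ⟨a, ha⟩ := hLC.exists_hasFactorSet (G := Gal(L/F))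
  obtain ⟨n, ⟨T⟩⟩ := ha
  have := nonempty_of_card_sq_eq_finrank T.card_sq
  obtain ⟨k, hk⟩ :=
    T.exists_isCoboundary_div_pow_of_splitsOver hb (h _ T.splitsOver_invariantField)
  exact ⟨k, brauerEquiv_tpow_of_isCoboundary_div_pow hB hC hb T.hasFactorSet hk⟩

end Amitsur

/-- Amitsur: the kernel of `Br(F) → Br(F(SB(C)))` — here `F(SB(C))` is
formalized as a generic splitting field `E` of `C`, which the function field of the
Severi–Brauer variety of `C` is — consists exactly of the classes of the tensor powers
of `C`, i.e. of the cyclic subgroup generated by `[C]`. -/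
theorem kernel_genericSplittingField (F C : Type u) [Field F] [Ring C] [Algebra F C]
    (hC : IsCSA F C) (E : Type u) [Field E] [Algebra F E]
    (hE : IsGenericSplittingField F C E) :
    ∀ (B : Type u) [Ring B] [Algebra F B], IsCSA F B →
      (IsSplit E (E ⊗[F] B) ↔ ∃ i : ℕ, BrauerEquiv F B (tpow F C i)) := by
  intro B _ _ hB
  have ⟨_, _, _⟩ := hB
  rw [hB.isSplit_iff_splitsOver]
  constructor
  · intro hEB
    refine Amitsur.exists_brauerEquiv_tpow hB hC fun N _ _ hNC ↦ ?_
    obtain ⟨P⟩ := hE.2 N (hC.isSplit_iff_splitsOver.2 hNC)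
    exact hEB.of_place P
  · rintro ⟨i, hi⟩
    have hEC := hC.isSplit_iff_splitsOver.1 hE.1
    exact (hEC.tpow i).of_brauerEquiv hi
end
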